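/- arXiv:2305.12942 — 2 statements merged into one kernel-verified Lean document; each statement's English description precedes it below -/
import Mathlib

section
/- Let R be a finite commutative ring with γ_a(Γ(R)) = 1. Then the following are equivalent: (1) Γ(R) is partitionable into global defensive alliances; (2) |Z(R)| = 3; (3) R is isomorphic to one of the rings ℤ₂ × ℤ₂, ℤ₉, ℤ₃[X]/(X²). -/
open Classical

/-- The set of zero-divisors of `R` (including `0`). -/
def zeroDivisorSet (R : Type*) [CommRing R] : Set R :=
  {x : R | ∃ y : R, y ≠ 0 ∧ x * y = 0}

/-- Vertices of the zero-divisor graph: the nonzero zero-divisors of `R`. -/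
abbrev ZDV (R : Type*) [CommRing R] : Type _ :=
  {x : R // x ≠ 0 ∧ ∃ y : R, y ≠ 0 ∧ x * y = 0}

/-- The zero-divisor graph `Γ(R)` of a commutative ring `R`: vertices are the nonzero
zero-divisors, and distinct vertices `x`, `y` are adjacent iff `x * y = 0`. -/
def zdGraph (R : Type*) [CommRing R] : SimpleGraph (ZDV R) where
  Adj a b := a ≠ b ∧ (a : R) * (b : R) = 0
  symm := by
    constructor
    intro a b h
    exact ⟨h.1.symm, by rw [mul_comm]; exact h.2⟩
  loopless := by
    constructor
    intro a h
    exact h.1 rfl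

/-- `degIn G S v` is the number of neighbors of `v` lying in `S`. -/
noncomputable def degIn {V : Type*} (G : SimpleGraph V) (S : Set V) (v : V) : ℕ :=
  Set.ncard {u : V | u ∈ S ∧ G.Adj v u}

/-- `S` is a dominating set: every vertex outside `S` has a neighbor in `S`. -/
def IsDominatingSet {V : Type*} (G : SimpleGraph V) (S : Set V) : Prop :=
  ∀ v ∉ S, ∃ u ∈ S, G.Adj v u

/-- `S` is a defensive alliance: `S` is nonempty and every `v ∈ S` satisfies
`deg_S(v) + 1 ≥ deg_{Sᶜ}(v)`. -/
def IsDefensiveAlliance {V : Type*} (G : SimpleGraph V) (S : Set V) : Prop :=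
  S.Nonempty ∧ ∀ v ∈ S, degIn G Sᶜ v ≤ degIn G S v + 1

/-- A global defensive alliance is a defensive alliance that is also a dominating set. -/
def IsGlobalDefensiveAlliance {V : Type*} (G : SimpleGraph V) (S : Set V) : Prop :=
  IsDefensiveAlliance G S ∧ IsDominatingSet G S

/-- `P` is a partition of the vertex set of `G` into global defensive alliances. -/
def IsGDAPartition {V : Type*} (G : SimpleGraph V) (P : Finset (Set V)) : Prop :=
  (∀ S ∈ P, IsGlobalDefensiveAlliance G S) ∧
  (⋃₀ (P : Set (Set V)) = Set.univ) ∧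
  ((P : Set (Set V)).Pairwise Disjoint)

/-- The global defensive alliance partition number `ψ_g(G)`: the maximum number of parts in
a partition of the vertex set into global defensive alliances. -/
noncomputable def psiG {V : Type*} (G : SimpleGraph V) : ℕ :=
  sSup {n : ℕ | ∃ P : Finset (Set V), IsGDAPartition G P ∧ P.card = n}

/-- `G` is partitionable into global defensive alliances iff `ψ_g(G) ≥ 2`. -/
def PartitionableGDA {V : Type*} (G : SimpleGraph V) : Prop :=
  2 ≤ psiG G

/-- The global defensive alliance number `γ_a(G)`: the minimum cardinality of a global
defensive alliance. -/
noncomputable def gammaA {V : Type*} (G : SimpleGraph V) : ℕ :=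
  sInf {n : ℕ | ∃ S : Set V, IsGlobalDefensiveAlliance G S ∧ S.ncard = n}

/-!
A single vertex of a finite graph is a global defensive alliance exactly when it is adjacent to
all others and there are at most two vertices. Hence `γ_a = 1` leaves at most two vertices, each
of them an alliance on its own, so that `ψ_g` is the number of vertices, which for `Γ(R)` is
`|Z(R)| - 1`.

The classification of the rings with `|Z(R)| = 3` does not involve alliances. If
`Z(R) = {0, a, b}`, then `ab = 0`. Both `aR` and `ann a` lie in `Z(R)`, and `|R| = |aR| |ann a|`.
If `a² ≠ 0` and `b² ≠ 0`, then `ann a = {0, b}` and `ann b = {0, a}` intersect trivially and have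
quotients of order two, so that `R ≅ ℤ₂ × ℤ₂`. If `a² = 0`, then `aR = ann a = Z(R)` and
`|R| = 9`; according to whether `3` vanishes in `R`, either `X²` is the minimal polynomial of `a`
over `ℤ₃`, or `1` has additive order `9`.
-/

section Graph

variable {V : Type*} {G : SimpleGraph V}

theorem degIn_singleton_self (v : V) : degIn G {v} v = 0 := by
  have hempty : {u : V | u ∈ ({v} : Set V) ∧ G.Adj v u} = ∅ :=
    Set.eq_empty_of_forall_notMem fun _ ⟨huv, hadj⟩ => hadj.ne huv.symm
  rw [degIn, hempty, Set.ncard_empty]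

theorem isDominatingSet_singleton_iff {v : V} :
    IsDominatingSet G {v} ↔ ∀ u ≠ v, G.Adj v u := by
  simp only [IsDominatingSet, Set.mem_singleton_iff, exists_eq_left, G.adj_comm v, ne_eq]

theorem degIn_compl_singleton_add_one [Finite V] {v : V} (hv : IsDominatingSet G {v}) :
    degIn G {v}ᶜ v + 1 = Nat.card V := by
  have hadj := isDominatingSet_singleton_iff.1 hv
  have hcompl : {u : V | u ∈ ({v} : Set V)ᶜ ∧ G.Adj v u} = {v}ᶜ :=
    Set.Subset.antisymm (fun _ hu => hu.1) fun u hu => ⟨hu, hadj u hu⟩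
  rw [degIn, hcompl, ← Set.ncard_add_ncard_compl {v}, Set.ncard_singleton, add_comm]

theorem isGlobalDefensiveAlliance_singleton_iff [Finite V] {v : V} :
    IsGlobalDefensiveAlliance G {v} ↔ (∀ u ≠ v, G.Adj v u) ∧ Nat.card V ≤ 2 := by
  have halliance : IsDefensiveAlliance G {v} ↔ degIn G {v}ᶜ v ≤ 1 := by
    simp [IsDefensiveAlliance, degIn_singleton_self]
  rw [IsGlobalDefensiveAlliance, halliance, and_comm, ← isDominatingSet_singleton_iff]
  refine and_congr_right fun hv => ?_
  rw [← degIn_compl_singleton_add_one hv, Nat.succ_le_succ_iff]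

theorem exists_isGlobalDefensiveAlliance_singleton_of_gammaA_eq_one (h : gammaA G = 1) :
    ∃ v, IsGlobalDefensiveAlliance G {v} := by
  obtain ⟨S, hS, hcard⟩ := Nat.sInf_mem (Nat.nonempty_of_sInf_eq_succ h)
  obtain ⟨v, rfl⟩ := Set.ncard_eq_one.1 (hcard.trans h)
  exact ⟨v, hS⟩

theorem natCard_le_two_of_gammaA_eq_one [Finite V] (h : gammaA G = 1) : Nat.card V ≤ 2 := by
  obtain ⟨v, hv⟩ := exists_isGlobalDefensiveAlliance_singleton_of_gammaA_eq_one h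
  exact (isGlobalDefensiveAlliance_singleton_iff.1 hv).2

theorem isGlobalDefensiveAlliance_singleton_of_gammaA_eq_one [Finite V] (h : gammaA G = 1)
    (u : V) : IsGlobalDefensiveAlliance G {u} := by
  obtain ⟨v, hv⟩ := exists_isGlobalDefensiveAlliance_singleton_of_gammaA_eq_one h
  obtain ⟨hadj, hcard⟩ := isGlobalDefensiveAlliance_singleton_iff.1 hv
  refine isGlobalDefensiveAlliance_singleton_iff.2 ⟨fun w hwu => ?_, hcard⟩
  by_cases huv : u = v
  · exact huv ▸ hadj w (huv ▸ hwu)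
  · have hwv : w = v := by
      by_contra hwv
      have hthree : ({u, v, w} : Set V).ncard = 3 :=
        Set.ncard_eq_three.2 ⟨u, v, w, huv, hwu.symm, Ne.symm hwv, rfl⟩
      have := Set.ncard_le_card ({u, v, w} : Set V)
      omega
    exact hwv ▸ (hadj u huv).symm

theorem IsGDAPartition.card_le_natCard [Finite V] {P : Finset (Set V)}
    (hP : IsGDAPartition G P) : P.card ≤ Nat.card V := by
  obtain ⟨halliance, -, hdisjoint⟩ := hP
  choose f hf using fun S : P => (halliance S S.2).1.1
  have hinj : Function.Injective f := by
    intro S T hST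
    by_contra hne
    exact Set.disjoint_left.1 (hdisjoint S.2 T.2 (Subtype.coe_ne_coe.2 hne)) (hf S) (hST ▸ hf T)
  simpa using Nat.card_le_card_of_injective f hinj

theorem psiG_le_natCard [Finite V] : psiG G ≤ Nat.card V :=
  csSup_le' <| by
    rintro _ ⟨P, hP, rfl⟩
    exact hP.card_le_natCard

theorem IsGDAPartition.card_le_psiG [Finite V] {P : Finset (Set V)} (hP : IsGDAPartition G P) :
    P.card ≤ psiG G := by
  refine le_csSup ⟨Nat.card V, ?_⟩ ⟨P, hP, rfl⟩
  rintro _ ⟨Q, hQ, rfl⟩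
  exact hQ.card_le_natCard

theorem natCard_le_psiG [Finite V] (hG : ∀ v, IsGlobalDefensiveAlliance G {v}) :
    Nat.card V ≤ psiG G := by
  have := Fintype.ofFinite V
  let P : Finset (Set V) := Finset.univ.map ⟨singleton, Set.singleton_injective⟩
  have hP : IsGDAPartition G P := by
    have hrange : (P : Set (Set V)) = Set.range singleton := by
      rw [Finset.coe_map, Finset.coe_univ, Set.image_univ, Function.Embedding.coeFn_mk]
    refine ⟨by simpa [P] using hG, ?_, hrange ▸ Set.pairwiseDisjoint_range_singleton⟩
    rw [hrange, Set.sUnion_range, Set.iUnion_of_singleton]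
  simpa [P] using hP.card_le_psiG

theorem psiG_eq_natCard_of_gammaA_eq_one [Finite V] (h : gammaA G = 1) :
    psiG G = Nat.card V :=
  psiG_le_natCard.antisymm
    (natCard_le_psiG (isGlobalDefensiveAlliance_singleton_of_gammaA_eq_one h))

theorem partitionableGDA_iff_natCard_eq_two [Finite V] (h : gammaA G = 1) :
    PartitionableGDA G ↔ Nat.card V = 2 := by
  rw [PartitionableGDA, psiG_eq_natCard_of_gammaA_eq_one h]
  have := natCard_le_two_of_gammaA_eq_one h
  omega

end Graph

section PrimeOrder

open Polynomial

variable {R : Type*} [Ring R]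

theorem natCard_ne_one_of_ne_bot {M : Type*} [AddCommGroup M] [Module R M] {N : Submodule R M}
    (hN : N ≠ ⊥) : Nat.card N ≠ 1 :=
  fun h => hN (Submodule.subsingleton_iff_eq_bot.1 (Nat.card_eq_one_iff_unique.1 h).1)

theorem eq_of_le_of_prime_natCard {M : Type*} [AddCommGroup M] [Module R M] {N K : Submodule R M}
    (hle : N ≤ K) (hN : N ≠ ⊥) (hK : (Nat.card K).Prime) : N = K := by
  have : Finite K := Nat.finite_of_card_ne_zero hK.ne_zero
  have hdvd : Nat.card N ∣ Nat.card K :=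
    AddSubgroup.card_dvd_of_le (Submodule.toAddSubgroup_mono hle)
  have hcard : Nat.card N = Nat.card K :=
    (hK.eq_one_or_self_of_dvd _ hdvd).resolve_left (natCard_ne_one_of_ne_bot hN)
  exact Submodule.toAddSubgroup_injective
    (AddSubgroup.eq_of_le_of_card_ge (Submodule.toAddSubgroup_mono hle) hcard.ge)

theorem nonempty_ringEquiv_zmod_of_prime_natCard {p : ℕ} (hp : p.Prime) (hR : Nat.card R = p) :
    Nonempty (R ≃+* ZMod p) := by
  have : Finite R := Nat.finite_of_card_ne_zero (hR ▸ hp.ne_zero)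
  have := Fintype.ofFinite R
  exact ⟨(ZMod.ringEquivOfPrime R hp (by rw [← Nat.card_eq_fintype_card, hR])).symm⟩

theorem nonempty_ringEquiv_zmod_prime_pow {p n : ℕ} (hp : p.Prime)
    (hR : Nat.card R = p ^ (n + 1)) (hpn : (p : R) ^ n ≠ 0) :
    Nonempty (R ≃+* ZMod (p ^ (n + 1))) := by
  have := Fact.mk hp
  have : Finite R := Nat.finite_of_card_ne_zero (hR ▸ pow_ne_zero _ hp.ne_zero)
  have := Fintype.ofFinite R
  have horder : addOrderOf (1 : R) = p ^ (n + 1) :=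
    addOrderOf_eq_prime_pow (by simpa using hpn) (hR ▸ card_nsmul_eq_zero')
  have : CharP R (p ^ (n + 1)) := horder ▸ CharP.addOrderOf_one R
  exact ⟨(ZMod.ringEquiv R (by rw [← Nat.card_eq_fintype_card, hR])).symm⟩

theorem minpoly_eq_X_pow {k A : Type*} [Field k] [Ring A] [Algebra k A] {a : A} {n : ℕ}
    (hn : a ^ n ≠ 0) (hn1 : a ^ (n + 1) = 0) : minpoly k a = X ^ (n + 1) := by
  have hdvd : minpoly k a ∣ X ^ (n + 1) := minpoly.dvd k a (by simpa using hn1)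
  have hint : IsIntegral k a := ⟨X ^ (n + 1), monic_X_pow _, by simpa using hn1⟩
  obtain ⟨i, hi, hassoc⟩ := (dvd_prime_pow prime_X _).1 hdvd
  have hmin : minpoly k a = X ^ i :=
    eq_of_monic_of_associated (minpoly.monic hint) (monic_X_pow i) hassoc
  have hai : a ^ i = 0 := by simpa [hmin] using minpoly.aeval k a
  have hni : ¬ i ≤ n := fun h => hn (pow_eq_zero_of_le h hai)
  rw [hmin, show i = n + 1 by omega]

theorem nonempty_algEquiv_quotient_span_X_pow {k A : Type*} [Field k] [Ring A] [Algebra k A]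
    {a : A} {n : ℕ} (hn : a ^ n ≠ 0) (hn1 : a ^ (n + 1) = 0)
    (hrank : Module.finrank k A = n + 1) :
    Nonempty (A ≃ₐ[k] k[X] ⧸ Ideal.span {(X : k[X]) ^ (n + 1)}) := by
  have hker : RingHom.ker (aeval a : k[X] →ₐ[k] A) = Ideal.span {X ^ (n + 1)} := by
    rw [minpoly.ker_aeval_eq_span_minpoly, minpoly_eq_X_pow hn hn1]
  let f := Ideal.kerLiftAlg (aeval a : k[X] →ₐ[k] A)
  have hinj : Function.Injective f := Ideal.kerLiftAlg_injective _
  have hrank' : Module.finrank k (k[X] ⧸ RingHom.ker (aeval a : k[X] →ₐ[k] A)) =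
      Module.finrank k A := by
    rw [hker, finrank_quotient_span_eq_natDegree, natDegree_X_pow, hrank]
  have : FiniteDimensional k A := Module.finite_of_finrank_eq_succ hrank
  have : FiniteDimensional k (k[X] ⧸ RingHom.ker (aeval a : k[X] →ₐ[k] A)) :=
    Module.Finite.of_injective f.toLinearMap hinj
  have hsurj : Function.Surjective f :=
    (LinearMap.injective_iff_surjective_of_finrank_eq_finrank hrank' (f := f.toLinearMap)).1 hinj
  exact ⟨(AlgEquiv.ofBijective f ⟨hinj, hsurj⟩).symm.trans (Ideal.quotientEquivAlgOfEq k hker)⟩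

theorem nonempty_ringEquiv_zmod_quotient_span_X_pow {p n : ℕ} (hp : p.Prime)
    (hR : Nat.card R = p ^ (n + 1)) (hpR : (p : R) = 0) {a : R} (hn : a ^ n ≠ 0)
    (hn1 : a ^ (n + 1) = 0) :
    Nonempty (R ≃+* (ZMod p)[X] ⧸ Ideal.span {(X : (ZMod p)[X]) ^ (n + 1)}) := by
  have := Fact.mk hp
  have : Nontrivial R := nontrivial_of_ne _ _ hn
  have : CharP R p := (CharP.charP_iff_prime_eq_zero hp).2 hpR
  let _ : Algebra (ZMod p) R := ZMod.algebra R p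
  have : Finite R := Nat.finite_of_card_ne_zero (hR ▸ pow_ne_zero _ hp.ne_zero)
  have hrank : Module.finrank (ZMod p) R = n + 1 := by
    refine Nat.pow_right_injective hp.two_le ?_
    simpa only [← hR, Nat.card_zmod] using (Module.natCard_eq_pow_finrank (K := ZMod p)).symm
  obtain ⟨e⟩ := nonempty_algEquiv_quotient_span_X_pow hn hn1 hrank
  exact ⟨e.toRingEquiv⟩

theorem nonempty_ringEquiv_of_natCard_eq_prime_sq {p : ℕ} (hp : p.Prime)
    (hR : Nat.card R = p ^ 2) {a : R} (ha : a ≠ 0) (haa : a * a = 0) :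
    Nonempty (R ≃+* ZMod (p ^ 2)) ∨
      Nonempty (R ≃+* (ZMod p)[X] ⧸ Ideal.span {(X : (ZMod p)[X]) ^ 2}) := by
  by_cases hpR : (p : R) = 0
  · exact .inr (nonempty_ringEquiv_zmod_quotient_span_X_pow hp hR hpR (by rwa [pow_one])
      (by rwa [← sq] at haa))
  · exact .inl (nonempty_ringEquiv_zmod_prime_pow hp hR (by rwa [pow_one]))

end PrimeOrder

section TorsionOf

variable {R : Type*} [CommRing R]

theorem span_singleton_le_torsionOf {a b : R} (hab : a * b = 0) :
    Ideal.span {b} ≤ Ideal.torsionOf R R a := by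
  rw [Ideal.span_singleton_le_iff_mem, Ideal.mem_torsionOf_iff, smul_eq_mul, mul_comm, hab]

theorem span_singleton_eq_torsionOf {a b : R} (hb : b ≠ 0) (hab : a * b = 0)
    (hp : (Nat.card (Ideal.torsionOf R R a)).Prime) :
    Ideal.span {b} = Ideal.torsionOf R R a :=
  eq_of_le_of_prime_natCard (span_singleton_le_torsionOf hab)
    (Ideal.span_singleton_eq_bot.not.2 hb) hp

theorem natCard_quotient_torsionOf (a : R) :
    Nat.card (R ⧸ Ideal.torsionOf R R a) = Nat.card (Ideal.span {a}) :=
  Nat.card_congr (Ideal.quotTorsionOfEquivSpanSingleton R R a).toEquiv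

theorem natCard_torsionOf_mul_natCard_span_singleton (a : R) :
    Nat.card (Ideal.torsionOf R R a) * Nat.card (Ideal.span {a}) = Nat.card R := by
  rw [← natCard_quotient_torsionOf,
    ← Submodule.card_eq_card_quotient_mul_card (Ideal.torsionOf R R a)]

theorem nonempty_ringEquiv_quotient_prod_quotient [Finite R] {I J : Ideal R} (hIJ : I ⊓ J = ⊥)
    (hcard : Nat.card R = Nat.card (R ⧸ I) * Nat.card (R ⧸ J)) :
    Nonempty (R ≃+* (R ⧸ I) × (R ⧸ J)) := by
  let f : R →+* (R ⧸ I) × (R ⧸ J) := (Ideal.Quotient.mk I).prod (Ideal.Quotient.mk J)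
  have hinj : Function.Injective f := by
    refine (injective_iff_map_eq_zero f).2 fun x hx => ?_
    have hmem : x ∈ I ⊓ J := ⟨Ideal.Quotient.eq_zero_iff_mem.1 (congrArg Prod.fst hx),
      Ideal.Quotient.eq_zero_iff_mem.1 (congrArg Prod.snd hx)⟩
    rwa [hIJ, Ideal.mem_bot] at hmem
  have : Finite (R ⧸ I) := Finite.of_surjective _ Ideal.Quotient.mk_surjective
  have : Finite (R ⧸ J) := Finite.of_surjective _ Ideal.Quotient.mk_surjective
  have hbij : Function.Bijective f :=
    (Nat.bijective_iff_injective_and_card f).2 ⟨hinj, by rw [hcard, Nat.card_prod]⟩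
  exact ⟨RingEquiv.ofBijective f hbij⟩

theorem nonempty_ringEquiv_zmod_prod_zmod {a b : R} (ha : a ≠ 0) (hab : a * b = 0)
    (hbb : b * b ≠ 0) {p q : ℕ} (hp : p.Prime) (hq : q.Prime)
    (hap : Nat.card (Ideal.torsionOf R R a) = p) (hbq : Nat.card (Ideal.torsionOf R R b) = q) :
    Nonempty (R ≃+* ZMod q × ZMod p) := by
  have hspan_a : Ideal.span {a} = Ideal.torsionOf R R b :=
    span_singleton_eq_torsionOf ha (by rw [mul_comm, hab]) (hbq ▸ hq)
  have hspan_b : Ideal.span {b} = Ideal.torsionOf R R a :=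
    span_singleton_eq_torsionOf (left_ne_zero_of_mul hbb) hab (hap ▸ hp)
  have hqa : Nat.card (R ⧸ Ideal.torsionOf R R a) = q := by
    rw [natCard_quotient_torsionOf, hspan_a, hbq]
  have hqb : Nat.card (R ⧸ Ideal.torsionOf R R b) = p := by
    rw [natCard_quotient_torsionOf, hspan_b, hap]
  have hcard : Nat.card R = q * p := by
    rw [← natCard_torsionOf_mul_natCard_span_singleton a, hap, hspan_a, hbq, mul_comm]
  have : Finite R := Nat.finite_of_card_ne_zero (hcard ▸ mul_ne_zero hq.ne_zero hp.ne_zero)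
  have hinf : Ideal.torsionOf R R a ⊓ Ideal.torsionOf R R b = ⊥ := by
    by_contra hne
    have hle := inf_eq_left.1 (eq_of_le_of_prime_natCard inf_le_left hne (hap ▸ hp))
    exact hbb (hle (hspan_b ▸ Ideal.mem_span_singleton_self b))
  obtain ⟨e⟩ := nonempty_ringEquiv_quotient_prod_quotient hinf (by rw [hcard, hqa, hqb])
  obtain ⟨ea⟩ := nonempty_ringEquiv_zmod_of_prime_natCard hq hqa
  obtain ⟨eb⟩ := nonempty_ringEquiv_zmod_of_prime_natCard hp hqb
  exact ⟨e.trans (ea.prodCongr eb)⟩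

end TorsionOf

section ZeroDivisors

variable {R : Type*} [CommRing R]

theorem zero_mem_zeroDivisorSet [Nontrivial R] : (0 : R) ∈ zeroDivisorSet R :=
  ⟨1, one_ne_zero, zero_mul 1⟩

theorem natCard_zdv_add_one [Nontrivial R] (hfin : (zeroDivisorSet R).Finite) :
    Nat.card (ZDV R) + 1 = (zeroDivisorSet R).ncard := by
  have hdiff : zeroDivisorSet R \ {0} = {x : R | x ≠ 0 ∧ ∃ y : R, y ≠ 0 ∧ x * y = 0} :=
    Set.ext fun x => and_comm
  rw [← Set.ncard_sdiff_singleton_add_one zero_mem_zeroDivisorSet hfin, hdiff]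
  rfl

theorem ncard_zeroDivisorSet_congr {S : Type*} [CommRing S] (e : R ≃+* S) :
    (zeroDivisorSet R).ncard = (zeroDivisorSet S).ncard := by
  refine Nat.card_congr (e.toEquiv.subtypeEquiv fun x => ?_)
  simp [zeroDivisorSet, e.surjective.exists, ← map_mul]

theorem torsionOf_subset_zeroDivisorSet {a : R} (ha : a ≠ 0) :
    (Ideal.torsionOf R R a : Set R) ⊆ zeroDivisorSet R :=
  fun _ hx => ⟨a, ha, hx⟩

theorem natCard_eq_sq_of_prime_ncard_zeroDivisorSet {a : R} (ha : a ∈ zeroDivisorSet R)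
    (ha0 : a ≠ 0) (hann : ∀ x ∈ zeroDivisorSet R, x * a = 0)
    (hp : (zeroDivisorSet R).ncard.Prime) : Nat.card R = (zeroDivisorSet R).ncard ^ 2 := by
  have htorsion : (Ideal.torsionOf R R a : Set R) = zeroDivisorSet R :=
    (torsionOf_subset_zeroDivisorSet ha0).antisymm hann
  have hcard : Nat.card (Ideal.torsionOf R R a) = (zeroDivisorSet R).ncard := by
    rw [← htorsion]; rfl
  rw [← natCard_torsionOf_mul_natCard_span_singleton a,
    span_singleton_eq_torsionOf ha0 (hann a ha) (hcard ▸ hp), hcard, sq]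

theorem torsionOf_eq_zeroDivisorSet {a : R} (ha : a ≠ 0) (haa : a * a = 0)
    (hp : (Nat.card (Ideal.torsionOf R R a)).Prime) :
    (Ideal.torsionOf R R a : Set R) = zeroDivisorSet R := by
  have hspan : Ideal.span {a} = Ideal.torsionOf R R a := span_singleton_eq_torsionOf ha haa hp
  refine (torsionOf_subset_zeroDivisorSet ha).antisymm ?_
  rintro x ⟨y, hy, hxy⟩
  by_contra hxa
  -- As `aR` has prime order and `xa ≠ 0`, also `xaR = aR`. So `a` is a multiple of `xa` and is
  -- killed by `y`; but then `y ∈ ann a = aR`, and `x` kills nothing in `aR` but `0`.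
  have hspan_xa : Ideal.span {x * a} = Ideal.span {a} :=
    eq_of_le_of_prime_natCard (Ideal.span_singleton_le_span_singleton.2 (dvd_mul_left a x))
      (Ideal.span_singleton_eq_bot.not.2 hxa) (hspan ▸ hp)
  obtain ⟨r, hr⟩ : x * a ∣ a := Ideal.span_singleton_le_span_singleton.1 hspan_xa.ge
  have hya : y * a = 0 := by linear_combination y * hr + a * r * hxy
  obtain ⟨s, rfl⟩ : a ∣ y := by
    rw [← Ideal.mem_span_singleton, hspan]
    exact hya
  exact hy (by linear_combination s * hr + r * hxy)

theorem natCard_torsionOf_of_natCard_eq_prime_sq {p : ℕ} (hp : p.Prime)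
    (hR : Nat.card R = p ^ 2) {a : R} (ha : a ≠ 0) (haa : a * a = 0) :
    Nat.card (Ideal.torsionOf R R a) = p := by
  have hspan : Ideal.span {a} ≠ ⊥ := Ideal.span_singleton_eq_bot.not.2 ha
  have htorsion : Ideal.torsionOf R R a ≠ ⊥ :=
    ne_bot_of_le_ne_bot hspan (span_singleton_le_torsionOf haa)
  exact ((hp.mul_eq_prime_sq_iff (natCard_ne_one_of_ne_bot htorsion)
    (natCard_ne_one_of_ne_bot hspan)).1
      ((natCard_torsionOf_mul_natCard_span_singleton a).trans hR)).1

theorem ncard_zeroDivisorSet_of_natCard_eq_prime_sq {p : ℕ} (hp : p.Prime)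
    (hR : Nat.card R = p ^ 2) {a : R} (ha : a ≠ 0) (haa : a * a = 0) :
    (zeroDivisorSet R).ncard = p := by
  have hcard := natCard_torsionOf_of_natCard_eq_prime_sq hp hR ha haa
  rw [← torsionOf_eq_zeroDivisorSet ha haa (hcard ▸ hp)]
  exact hcard

theorem ncard_zeroDivisorSet_zmod_prime_sq {p : ℕ} (hp : p.Prime) :
    (zeroDivisorSet (ZMod (p ^ 2))).ncard = p := by
  refine ncard_zeroDivisorSet_of_natCard_eq_prime_sq hp (Nat.card_zmod _) (a := (p : ZMod (p ^ 2)))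
    ?_ ?_
  · rw [Ne, ZMod.natCast_eq_zero_iff]
    exact Nat.not_dvd_of_pos_of_lt hp.pos (lt_self_pow₀ hp.one_lt one_lt_two)
  · rw [← sq, ← Nat.cast_pow, ZMod.natCast_self]

open Polynomial in
theorem ncard_zeroDivisorSet_quotient_span_X_sq {p : ℕ} (hp : p.Prime) :
    (zeroDivisorSet ((ZMod p)[X] ⧸ Ideal.span {(X : (ZMod p)[X]) ^ 2})).ncard = p := by
  have := Fact.mk hp
  have : Module.Finite (ZMod p) ((ZMod p)[X] ⧸ Ideal.span {(X : (ZMod p)[X]) ^ 2}) :=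
    (monic_X_pow 2).finite_quotient
  refine ncard_zeroDivisorSet_of_natCard_eq_prime_sq hp ?_ (a := Ideal.Quotient.mk _ X) ?_ ?_
  · rw [Module.natCard_eq_pow_finrank (K := ZMod p), finrank_quotient_span_eq_natDegree,
      natDegree_X_pow, Nat.card_zmod]
  · rw [Ne, Ideal.Quotient.eq_zero_iff_dvd, X_pow_dvd_iff]
    intro h
    simpa using h 1 one_lt_two
  · rw [← map_mul, ← sq, Ideal.Quotient.eq_zero_iff_dvd]

theorem ncard_zeroDivisorSet_zmod_two_prod_zmod_two :
    (zeroDivisorSet (ZMod 2 × ZMod 2)).ncard = 3 := by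
  refine Set.ncard_eq_three.2 ⟨0, (1, 0), (0, 1), by decide, by decide, by decide, ?_⟩
  ext x
  simp only [zeroDivisorSet, Set.mem_ofPred_eq, Set.mem_insert_iff, Set.mem_singleton_iff]
  revert x
  decide

theorem mul_eq_zero_of_zeroDivisorSet_eq {a b : R} (ha : a ≠ 0) (hb : b ≠ 0)
    (hZ : zeroDivisorSet R = {0, a, b}) : a * b = 0 := by
  have hmem {x y : R} (hx : x ≠ 0) (hy : y ≠ 0) (hxy : x * y = 0) : x = a ∨ x = b := by
    have hxZ : x ∈ zeroDivisorSet R := ⟨y, hy, hxy⟩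
    rw [hZ] at hxZ
    exact hxZ.resolve_left hx
  obtain ⟨c, hc, hac⟩ : a ∈ zeroDivisorSet R := by simp [hZ]
  obtain ⟨d, hd, hbd⟩ : b ∈ zeroDivisorSet R := by simp [hZ]
  by_contra hne
  have haa : a * a = 0 := by
    rcases hmem hc ha (by rw [mul_comm, hac]) with rfl | rfl
    exacts [hac, absurd hac hne]
  have hbb : b * b = 0 := by
    rcases hmem hd hb (by rw [mul_comm, hbd]) with rfl | rfl
    exacts [absurd (by rw [mul_comm, hbd]) hne, hbd]
  rcases hmem hne ha (by linear_combination b * haa) with hab | hab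
  · exact hne (by linear_combination a * hbb - b * hab)
  · exact hne (by linear_combination b * haa - a * hab)

theorem exists_zeroDivisorSet_eq_of_ncard_eq_three (h : (zeroDivisorSet R).ncard = 3) :
    ∃ a b : R, a ≠ 0 ∧ b ≠ 0 ∧ zeroDivisorSet R = {0, a, b} := by
  have hncard : (zeroDivisorSet R).ncard ≠ 0 := h ▸ three_ne_zero
  obtain ⟨-, y, hy, -⟩ := Set.nonempty_of_ncard_ne_zero hncard
  have : Nontrivial R := nontrivial_of_ne y 0 hy
  have hzero : (0 : R) ∈ zeroDivisorSet R := zero_mem_zeroDivisorSet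
  have htwo : (zeroDivisorSet R \ {0}).ncard = 2 := by
    have := Set.ncard_sdiff_singleton_add_one hzero (Set.finite_of_ncard_ne_zero hncard)
    omega
  obtain ⟨a, b, -, hdiff⟩ := Set.ncard_eq_two.1 htwo
  have ha : a ∈ zeroDivisorSet R \ {0} := by simp [hdiff]
  have hb : b ∈ zeroDivisorSet R \ {0} := by simp [hdiff]
  exact ⟨a, b, ha.2, hb.2, by rw [← hdiff, Set.insert_sdiff_self_of_mem hzero]⟩

theorem natCard_torsionOf_eq_two {a b : R} (hb : b ≠ 0) (hab : a * b = 0)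
    (haa : a * a ≠ 0) (hZ : zeroDivisorSet R = {0, a, b}) :
    Nat.card (Ideal.torsionOf R R a) = 2 := by
  have htorsion : (Ideal.torsionOf R R a : Set R) = {0, b} := by
    refine Set.Subset.antisymm (fun x hx => ?_) ?_
    · have hxZ := torsionOf_subset_zeroDivisorSet (left_ne_zero_of_mul haa) hx
      rw [hZ] at hxZ
      rcases hxZ with rfl | rfl | rfl
      exacts [.inl rfl, absurd hx haa, .inr rfl]
    · rintro x (rfl | rfl)
      exacts [zero_mul a, (mul_comm _ _).trans hab]
  rw [← Set.ncard_pair hb.symm, ← htorsion]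
  rfl

open Polynomial in
theorem nonempty_ringEquiv_of_prime_ncard_zeroDivisorSet {p : ℕ} (hp : p.Prime)
    (hZ : (zeroDivisorSet R).ncard = p) {a : R} (ha : a ∈ zeroDivisorSet R) (ha0 : a ≠ 0)
    (hann : ∀ x ∈ zeroDivisorSet R, x * a = 0) :
    Nonempty (R ≃+* ZMod (p ^ 2)) ∨
      Nonempty (R ≃+* (ZMod p)[X] ⧸ Ideal.span {(X : (ZMod p)[X]) ^ 2}) := by
  subst hZ
  exact nonempty_ringEquiv_of_natCard_eq_prime_sq hp
    (natCard_eq_sq_of_prime_ncard_zeroDivisorSet ha ha0 hann hp) ha0 (hann a ha)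

open Polynomial in
theorem ncard_zeroDivisorSet_eq_three_iff :
    (zeroDivisorSet R).ncard = 3 ↔
      Nonempty (R ≃+* ZMod 2 × ZMod 2) ∨ Nonempty (R ≃+* ZMod 9) ∨
        Nonempty (R ≃+* (ZMod 3)[X] ⧸ Ideal.span {(X : (ZMod 3)[X]) ^ 2}) := by
  constructor
  · intro h
    obtain ⟨a, b, ha, hb, hZ⟩ := exists_zeroDivisorSet_eq_of_ncard_eq_three h
    have hab := mul_eq_zero_of_zeroDivisorSet_eq ha hb hZ
    have hba : b * a = 0 := (mul_comm b a).trans hab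
    by_cases haa : a * a = 0
    · exact .inr (nonempty_ringEquiv_of_prime_ncard_zeroDivisorSet Nat.prime_three h (a := a)
        (by simp [hZ]) ha (by simp [hZ, haa, hba]))
    by_cases hbb : b * b = 0
    · exact .inr (nonempty_ringEquiv_of_prime_ncard_zeroDivisorSet Nat.prime_three h (a := b)
        (by simp [hZ]) hb (by simp [hZ, hbb, hab]))
    exact .inl (nonempty_ringEquiv_zmod_prod_zmod ha hab hbb Nat.prime_two Nat.prime_two
      (natCard_torsionOf_eq_two hb hab haa hZ)
      (natCard_torsionOf_eq_two ha hba hbb (by rw [hZ, Set.pair_comm])))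
  · rintro (⟨⟨e⟩⟩ | ⟨⟨e⟩⟩ | ⟨⟨e⟩⟩) <;> rw [ncard_zeroDivisorSet_congr e]
    · exact ncard_zeroDivisorSet_zmod_two_prod_zmod_two
    · exact ncard_zeroDivisorSet_zmod_prime_sq Nat.prime_three
    · exact ncard_zeroDivisorSet_quotient_span_X_sq Nat.prime_three

end ZeroDivisors

/-- For a finite commutative ring `R` with `γ_a(Γ(R)) = 1`, the following
are equivalent: `Γ(R)` is partitionable into global defensive alliances; `|Z(R)| = 3`;
`R` is isomorphic to `ℤ₂ × ℤ₂`, `ℤ₉`, or `ℤ₃[X]/(X²)`. -/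
theorem stmt16 (R : Type*) [CommRing R] [Finite R] [Nontrivial R]
    (h : gammaA (zdGraph R) = 1) :
    (PartitionableGDA (zdGraph R) ↔ (zeroDivisorSet R).ncard = 3) ∧
    ((zeroDivisorSet R).ncard = 3 ↔
      (Nonempty (R ≃+* (ZMod 2 × ZMod 2)) ∨ Nonempty (R ≃+* ZMod 9) ∨
        Nonempty (R ≃+* (Polynomial (ZMod 3) ⧸
          Ideal.span {(Polynomial.X : Polynomial (ZMod 3)) ^ 2})))) := by
  refine ⟨?_, ncard_zeroDivisorSet_eq_three_iff⟩
  rw [partitionableGDA_iff_natCard_eq_two h, ← natCard_zdv_add_one (Set.toFinite _)]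
  omega
end

section
/- Let R be a finite commutative ring with γ_a(Γ(R)) = 2. Then: (1) ψ_g(Γ(R)) = 2 if and only if R is isomorphic to one of the rings ℤ₂ × ℤ₄, ℤ₂ × ℤ₂[X]/(X²), ℤ₃ × ℤ₃, ℤ₃ × 𝔽₄, ℤ₂₅, ℤ₅[X]/(X²); (2) ψ_g(Γ(R)) = 3 if and only if R ≅ 𝔽₄ × 𝔽₄. -/
/-!
A vertex of a global defensive alliance `S` has fewer than `|S|` neighbours inside `S`, hence at
most `|S|` outside, so domination gives `|V| ≤ |S| (|S| + 1)`. Thus `γ_a = 2` allows at most six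
vertices, while `ψ_g ≥ 2` forces at least `γ_a ψ_g ≥ 4`. Dominating the graph of a product of three
or more nontrivial rings takes one vertex per factor, so `R` is local or a product `A × B` of two
local rings.

* If `R` is local, its maximal ideal has five to seven elements: six is not a prime power, and for
  a prime number of elements the maximal ideal squares to zero, the graph is complete and
  `2 γ_a ≥ |V|` excludes seven. With five elements, `|R| = 25` and `ψ_g(K₄) = 2`.
* If `A` and `B` are fields, the graph is complete bipartite. Then `γ_a = 2 ≤ ψ_g` forces both sides
  to have two or three vertices, and a set is a global defensive alliance exactly when it meets
  both sides, so `ψ_g` is the size of the smaller side.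
* If `B` is not a field, counting vertices leaves only `|A| = 2` and `|B| = 4`. There every vertex
  other than `(1, 0)` and the nilpotent `(0, w)` is a leaf attached to one of these two, and leaves
  bound `ψ_g` by `2`.

The rings of order `p²` with a nonzero element of square zero are `ℤ/p²` and `𝔽_p[X]/(X²)`.
-/

open Classical

section Alliances

variable {V W ι : Type*} {G : SimpleGraph V} {H : SimpleGraph W} {S : Set V}

/-- A colouring whose colour classes are global defensive alliances. Such colourings encode the
partitions into global defensive alliances, with the colours as labels of the parts. -/
def IsAllianceColoring (G : SimpleGraph V) (c : V → ι) : Prop :=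
  ∀ i, IsGlobalDefensiveAlliance G (c ⁻¹' {i})

lemma IsAllianceColoring.surjective {c : V → ι} (hc : IsAllianceColoring G c) :
    Function.Surjective c :=
  fun i ↦ (hc i).1.1

lemma degIn_eq_ncard_inter (G : SimpleGraph V) (S : Set V) (v : V) :
    degIn G S v = (S ∩ G.neighborSet v).ncard :=
  rfl

lemma degIn_add_degIn_compl [Finite V] (G : SimpleGraph V) (S : Set V) (v : V) :
    degIn G S v + degIn G Sᶜ v = (G.neighborSet v).ncard := by
  rw [degIn_eq_ncard_inter, degIn_eq_ncard_inter, Set.inter_comm, Set.inter_comm Sᶜ,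
    ← Set.sdiff_eq, Set.ncard_inter_add_ncard_sdiff_eq_ncard]

lemma degIn_lt_ncard [Finite V] {v : V} (hv : v ∈ S) : degIn G S v < S.ncard :=
  Set.ncard_lt_ncard ⟨Set.inter_subset_left, fun h ↦ G.irrefl (h hv).2⟩

lemma isGlobalDefensiveAlliance_univ [Nonempty V] :
    IsGlobalDefensiveAlliance G (Set.univ : Set V) := by
  refine ⟨⟨Set.univ_nonempty, fun v _ ↦ ?_⟩, fun v hv ↦ (hv trivial).elim⟩
  simp [degIn]

lemma degIn_preimage (f : G ≃g H) (T : Set W) (v : V) :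
    degIn G (f ⁻¹' T) v = degIn H T (f v) := by
  have h : {u | u ∈ f ⁻¹' T ∧ G.Adj v u} = f ⁻¹' {w | w ∈ T ∧ H.Adj (f v) w} := by
    ext u
    simp [f.map_adj_iff]
  rw [degIn, degIn, h]
  exact Set.ncard_preimage_of_injective_subset_range f.injective (by simp [f.surjective.range_eq])

lemma isGlobalDefensiveAlliance_preimage_iff (f : G ≃g H) {T : Set W} :
    IsGlobalDefensiveAlliance G (f ⁻¹' T) ↔ IsGlobalDefensiveAlliance H T := by
  simp only [IsGlobalDefensiveAlliance, IsDefensiveAlliance, IsDominatingSet,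
    ← Set.preimage_compl, degIn_preimage, f.surjective.forall, f.surjective.exists,
    Set.mem_preimage, f.map_adj_iff, Set.Nonempty]

lemma gammaA_congr (f : G ≃g H) : gammaA G = gammaA H := by
  have h (n : ℕ) : (∃ S, IsGlobalDefensiveAlliance G S ∧ S.ncard = n) ↔
      ∃ T, IsGlobalDefensiveAlliance H T ∧ T.ncard = n := by
    rw [(Set.preimage_surjective.mpr f.injective).exists]
    refine exists_congr fun T ↦ and_congr (isGlobalDefensiveAlliance_preimage_iff f) ?_
    rw [Set.ncard_preimage_of_injective_subset_range f.injective
      (by simp [f.surjective.range_eq])]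
  simp only [gammaA, h]

lemma gammaA_le_ncard (hS : IsGlobalDefensiveAlliance G S) : gammaA G ≤ S.ncard :=
  Nat.sInf_le ⟨S, hS, rfl⟩

lemma exists_ncard_eq_gammaA (G : SimpleGraph V) [Nonempty V] :
    ∃ S, IsGlobalDefensiveAlliance G S ∧ S.ncard = gammaA G :=
  Nat.sInf_mem (s := {n | ∃ S, IsGlobalDefensiveAlliance G S ∧ S.ncard = n})
    ⟨_, _, isGlobalDefensiveAlliance_univ, rfl⟩

lemma nonempty_of_gammaA_ne_zero (h : gammaA G ≠ 0) : Nonempty V := by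
  obtain ⟨_, S, hS, -⟩ := Nat.nonempty_of_pos_sInf (Nat.pos_of_ne_zero h)
  exact hS.1.1.to_type

lemma IsGlobalDefensiveAlliance.card_le [Finite V] (hS : IsGlobalDefensiveAlliance G S) :
    Nat.card V ≤ S.ncard * (S.ncard + 1) := by
  have hcover : Sᶜ ⊆ ⋃ v ∈ S.toFinite.toFinset, Sᶜ ∩ G.neighborSet v := by
    intro v hv
    obtain ⟨u, hu, huv⟩ := hS.2 v hv
    simp only [Set.mem_iUnion]
    exact ⟨u, by simpa using hu, hv, huv.symm⟩
  have hcompl : Sᶜ.ncard ≤ S.ncard * S.ncard := calc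
    Sᶜ.ncard ≤ ∑ v ∈ S.toFinite.toFinset, degIn G Sᶜ v :=
      (Set.ncard_le_ncard hcover).trans (Finset.set_ncard_biUnion_le _ _)
    _ ≤ ∑ _v ∈ S.toFinite.toFinset, S.ncard := by
      refine Finset.sum_le_sum fun v hv ↦ ?_
      have hv : v ∈ S := by simpa using hv
      exact (hS.1.2 v hv).trans (degIn_lt_ncard hv)
    _ = S.ncard * S.ncard := by rw [Finset.sum_const, ← Set.ncard_eq_toFinset_card, smul_eq_mul]
  have := Set.ncard_add_ncard_compl S
  lia

lemma bddAbove_card_isGDAPartition [Finite V] (G : SimpleGraph V) :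
    BddAbove {n | ∃ P : Finset (Set V), IsGDAPartition G P ∧ P.card = n} := by
  refine ((Set.finite_range (Finset.card (α := Set V))).subset ?_).bddAbove
  rintro _ ⟨P, -, rfl⟩
  exact Set.mem_range_self P

lemma IsAllianceColoring.card_le_psiG [Finite V] {c : V → ι} (hc : IsAllianceColoring G c) :
    Nat.card ι ≤ psiG G := by
  have := Finite.of_surjective c hc.surjective
  have := Fintype.ofFinite ι
  have hinj : Function.Injective fun i ↦ c ⁻¹' {i} :=
    hc.surjective.preimage_injective.comp Set.singleton_injective
  refine le_csSup (bddAbove_card_isGDAPartition G)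
    ⟨Finset.univ.image fun i ↦ c ⁻¹' {i}, ⟨?_, ?_, ?_⟩, ?_⟩
  · simpa [IsAllianceColoring] using hc
  · ext v
    simp
  · rintro _ hS _ hT hne
    obtain ⟨i, -, rfl⟩ := Finset.mem_image.mp hS
    obtain ⟨j, -, rfl⟩ := Finset.mem_image.mp hT
    refine Disjoint.preimage c (Set.disjoint_singleton.mpr ?_)
    rintro rfl
    exact hne rfl
  · rw [Finset.card_image_of_injective _ hinj, Finset.card_univ, Nat.card_eq_fintype_card]

lemma exists_isGDAPartition_card_eq_psiG [Finite V] (G : SimpleGraph V) :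
    ∃ P, IsGDAPartition G P ∧ P.card = psiG G := by
  refine Nat.sSup_mem (s := {n | ∃ P, IsGDAPartition G P ∧ P.card = n}) ?_
    (bddAbove_card_isGDAPartition G)
  cases isEmpty_or_nonempty V
  · exact ⟨_, ∅, ⟨by simp, Subsingleton.elim _ _, by simp⟩, rfl⟩
  · exact ⟨_, {Set.univ}, ⟨by simpa using isGlobalDefensiveAlliance_univ, by simp, by simp⟩, rfl⟩

lemma exists_isAllianceColoring [Finite V] (G : SimpleGraph V) :
    ∃ c : V → Fin (psiG G), IsAllianceColoring G c := by
  obtain ⟨P, ⟨hP, hcover, hdisj⟩, hcard⟩ := exists_isGDAPartition_card_eq_psiG G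
  have hmem (v : V) : ∃ S : P, v ∈ S.1 := by
    obtain ⟨S, hS, hv⟩ := Set.mem_sUnion.mp (hcover.symm ▸ Set.mem_univ v)
    exact ⟨⟨S, hS⟩, hv⟩
  choose part hpart using hmem
  have hpart_eq (v : V) (S : P) : part v = S ↔ v ∈ S.1 := by
    refine ⟨fun h ↦ h ▸ hpart v, fun hv ↦ ?_⟩
    by_contra hne
    exact Set.disjoint_left.mp (hdisj (part v).2 S.2 (Subtype.coe_ne_coe.mpr hne)) (hpart v) hv
  let e : P ≃ Fin (psiG G) := Fintype.equivFinOfCardEq (by simpa using hcard)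
  refine ⟨e ∘ part, fun i ↦ ?_⟩
  have hclass : e ∘ part ⁻¹' {i} = (e.symm i).1 := by
    ext v
    simp [← e.eq_symm_apply, hpart_eq]
  rw [hclass]
  exact hP _ (e.symm i).2

lemma psiG_congr [Finite V] (f : G ≃g H) : psiG G = psiG H := by
  have := Finite.of_equiv V f.toEquiv
  obtain ⟨c, hc⟩ := exists_isAllianceColoring G
  obtain ⟨d, hd⟩ := exists_isAllianceColoring H
  have hc' : IsAllianceColoring H (c ∘ f.symm) := fun i ↦
    (isGlobalDefensiveAlliance_preimage_iff f.symm).mpr (hc i)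
  have hd' : IsAllianceColoring G (d ∘ f) := fun i ↦
    (isGlobalDefensiveAlliance_preimage_iff f).mpr (hd i)
  exact le_antisymm (by simpa using hc'.card_le_psiG) (by simpa using hd'.card_le_psiG)

lemma gammaA_mul_psiG_le_card [Finite V] (G : SimpleGraph V) :
    gammaA G * psiG G ≤ Nat.card V := by
  obtain ⟨c, hc⟩ := exists_isAllianceColoring G
  have hle (i : Fin (psiG G)) : gammaA G ≤ Nat.card {v // c v = i} := gammaA_le_ncard (hc i)
  rw [← Nat.card_congr (Equiv.sigmaFiberEquiv c), Nat.card_sigma]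
  simpa [mul_comm] using Finset.sum_le_sum fun i (_ : i ∈ Finset.univ) ↦ hle i

lemma psiG_le_degree_add_one [Finite V] (G : SimpleGraph V) (v : V) :
    psiG G ≤ (G.neighborSet v).ncard + 1 := by
  obtain ⟨c, hc⟩ := exists_isAllianceColoring G
  have hsurj : c '' insert v (G.neighborSet v) = Set.univ := by
    refine Set.eq_univ_of_forall fun i ↦ ?_
    by_cases hv : c v = i
    · exact ⟨v, by simp, hv⟩
    · obtain ⟨u, hu, huv⟩ := (hc i).2 v hv
      exact ⟨u, by simp [huv], hu⟩
  calc
    psiG G = (c '' insert v (G.neighborSet v)).ncard := by simp [hsurj]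
    _ ≤ (insert v (G.neighborSet v)).ncard := Set.ncard_image_le
    _ ≤ (G.neighborSet v).ncard + 1 := Set.ncard_insert_le _ _

lemma two_le_psiG [Finite V] (hS : IsGlobalDefensiveAlliance G S)
    (hSc : IsGlobalDefensiveAlliance G Sᶜ) : 2 ≤ psiG G := by
  have hc : IsAllianceColoring G (· ∈ S) := by
    intro p
    by_cases hp : p
    · convert hS
      ext v
      simp [hp]
    · convert hSc
      ext v
      simp [hp]
  simpa using hc.card_le_psiG

lemma exists_adj_notMem_of_subsingleton [Finite V] (hγ : 2 ≤ gammaA G) (hψ : 2 ≤ psiG G)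
    {C : Set V} (hC : C.Subsingleton) : ∃ v ∉ C, ∃ w ∉ C, G.Adj v w := by
  obtain ⟨c, hc⟩ := exists_isAllianceColoring G
  have : Nontrivial (Fin (psiG G)) := Fin.nontrivial_iff_two_le.mpr hψ
  obtain ⟨i, hi⟩ : ∃ i, i ∉ c '' C := by
    by_contra! h
    obtain ⟨i, j, hij⟩ := exists_pair_ne (Fin (psiG G))
    exact hij (hC.image c (h i) (h j))
  obtain ⟨j, hji⟩ := exists_ne i
  obtain ⟨v, hv, hvC⟩ : ∃ v ∈ c ⁻¹' {j}, v ∉ C := by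
    by_contra! h
    have := gammaA_le_ncard (hc j)
    have := Set.ncard_le_one_iff_subsingleton.mpr (hC.anti h)
    lia
  have hvi : v ∉ c ⁻¹' {i} := by
    rintro rfl
    exact hji hv.symm
  obtain ⟨w, hw, hvw⟩ := (hc i).2 v hvi
  exact ⟨v, hvC, w, fun hwC ↦ hi ⟨w, hwC, hw⟩, hvw⟩

lemma psiG_eq_two_of_leaves [Finite V] (hS : IsDefensiveAlliance G S) (hSc : Sᶜ.Nonempty)
    (hleaf : ∀ v ∉ S, ∃ u ∈ S, G.neighborSet v = {u}) (hdom : ∀ u ∈ S, ∃ v ∉ S, G.Adj u v) :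
    psiG G = 2 := by
  have hdeg {v : V} (hv : v ∉ S) : (G.neighborSet v).ncard = 1 := by
    obtain ⟨u, -, hu⟩ := hleaf v hv
    simp [hu]
  refine le_antisymm ?_ (two_le_psiG ⟨hS, fun v hv ↦ ?_⟩ ⟨⟨hSc, fun v hv ↦ ?_⟩, fun u hu ↦ ?_⟩)
  · obtain ⟨v, hv⟩ := hSc
    simpa [hdeg hv] using psiG_le_degree_add_one G v
  · obtain ⟨u, hu, huv⟩ := hleaf v hv
    exact ⟨u, hu, by simp [← G.mem_neighborSet, huv]⟩
  · have := degIn_add_degIn_compl G Sᶜ v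
    have := hdeg hv
    lia
  · exact hdom u (not_not.mp hu)

lemma isGlobalDefensiveAlliance_top_iff [Finite V] [Nonempty V] :
    IsGlobalDefensiveAlliance (⊤ : SimpleGraph V) S ↔ Nat.card V ≤ 2 * S.ncard := by
  have hcard := Set.ncard_add_ncard_compl S
  have hne : 0 < Nat.card V := Nat.card_pos
  have hin {v : V} (hv : v ∈ S) : degIn ⊤ S v + 1 = S.ncard := by
    rw [degIn_eq_ncard_inter, ← Set.ncard_sdiff_singleton_add_one hv]
    congr 2
    ext u
    simp [ne_comm]
  have hout {v : V} (hv : v ∈ S) : degIn ⊤ Sᶜ v = Sᶜ.ncard := by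
    rw [degIn_eq_ncard_inter, Set.inter_eq_left.mpr]
    rintro u hu rfl
    exact hu hv
  constructor
  · rintro ⟨⟨⟨v, hv⟩, hS⟩, -⟩
    have := hS v hv
    rw [hin hv, hout hv] at this
    lia
  · intro h
    obtain ⟨w, hw⟩ : S.Nonempty := Set.nonempty_of_ncard_ne_zero (by lia)
    refine ⟨⟨⟨w, hw⟩, fun v hv ↦ ?_⟩, fun v hv ↦ ⟨w, hw, ?_⟩⟩
    · rw [hin hv, hout hv]
      lia
    · rintro rfl
      exact hv hw

lemma card_le_two_mul_gammaA_top [Finite V] [Nonempty V] :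
    Nat.card V ≤ 2 * gammaA (⊤ : SimpleGraph V) := by
  obtain ⟨S, hS, hcard⟩ := exists_ncard_eq_gammaA (⊤ : SimpleGraph V)
  exact hcard ▸ isGlobalDefensiveAlliance_top_iff.mp hS

lemma psiG_top_of_even [Finite V] [Nonempty V] (h : Even (Nat.card V)) :
    psiG (⊤ : SimpleGraph V) = 2 := by
  have hne : 0 < Nat.card V := Nat.card_pos
  apply le_antisymm
  · have hγ := card_le_two_mul_gammaA_top (V := V)
    have := (gammaA_mul_psiG_le_card (⊤ : SimpleGraph V)).trans (hγ.trans_eq (mul_comm _ _))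
    exact Nat.le_of_mul_le_mul_left this (by lia)
  · obtain ⟨k, hk⟩ := h
    obtain ⟨S, -, hS⟩ := Set.exists_subset_card_eq (s := (Set.univ : Set V)) (n := k)
      (by rw [Set.ncard_univ]; lia)
    have hcard := Set.ncard_add_ncard_compl S
    exact two_le_psiG (S := S) (isGlobalDefensiveAlliance_top_iff.mpr (by lia))
      (isGlobalDefensiveAlliance_top_iff.mpr (by lia))

end Alliances

section CompleteBipartite

variable {α β : Type*} {S : Set (α ⊕ β)}

lemma degIn_completeBipartiteGraph_inl (S : Set (α ⊕ β)) (a : α) :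
    degIn (completeBipartiteGraph α β) S (Sum.inl a) = (Sum.inr ⁻¹' S).ncard := by
  rw [degIn, ← Set.ncard_image_of_injective (Sum.inr ⁻¹' S) Sum.inr_injective]
  congr 1
  ext (x | y) <;> simp

lemma degIn_completeBipartiteGraph_inr (S : Set (α ⊕ β)) (b : β) :
    degIn (completeBipartiteGraph α β) S (Sum.inr b) = (Sum.inl ⁻¹' S).ncard := by
  rw [degIn, ← Set.ncard_image_of_injective (Sum.inl ⁻¹' S) Sum.inl_injective]
  congr 1
  ext (x | y) <;> simp

lemma ncard_preimage_inl_add_ncard_preimage_inr [Finite α] [Finite β] (S : Set (α ⊕ β)) :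
    (Sum.inl ⁻¹' S).ncard + (Sum.inr ⁻¹' S).ncard = S.ncard := by
  rw [← Set.ncard_image_of_injective (Sum.inl ⁻¹' S) Sum.inl_injective,
    ← Set.ncard_image_of_injective (Sum.inr ⁻¹' S) Sum.inr_injective, ← Set.ncard_union_eq,
    Set.image_preimage_inl_union_image_preimage_inr]
  exact Set.disjoint_image_inl_image_inr

namespace IsDefensiveAlliance

lemma nonempty_preimage_inl (hα : 2 ≤ Nat.card α)
    (hS : IsDefensiveAlliance (completeBipartiteGraph α β) S) : (Sum.inl ⁻¹' S).Nonempty := by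
  obtain ⟨⟨a | b, hab⟩, hS⟩ := hS
  · exact ⟨a, hab⟩
  · by_contra! hempty
    have := hS _ hab
    simp only [degIn_completeBipartiteGraph_inr, Set.preimage_compl, hempty, Set.compl_empty,
      Set.ncard_univ, Set.ncard_empty] at this
    lia

lemma nonempty_preimage_inr (hβ : 2 ≤ Nat.card β)
    (hS : IsDefensiveAlliance (completeBipartiteGraph α β) S) : (Sum.inr ⁻¹' S).Nonempty := by
  obtain ⟨⟨a | b, hab⟩, hS⟩ := hS
  · by_contra! hempty
    have := hS _ hab
    simp only [degIn_completeBipartiteGraph_inl, Set.preimage_compl, hempty, Set.compl_empty,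
      Set.ncard_univ, Set.ncard_empty] at this
    lia
  · exact ⟨b, hab⟩

end IsDefensiveAlliance

lemma isGlobalDefensiveAlliance_completeBipartiteGraph [Finite α] [Finite β]
    (hα : Nat.card α ≤ 3) (hβ : Nat.card β ≤ 3) (hl : (Sum.inl ⁻¹' S).Nonempty)
    (hr : (Sum.inr ⁻¹' S).Nonempty) :
    IsGlobalDefensiveAlliance (completeBipartiteGraph α β) S := by
  have hl' := hl.ncard_pos
  have hr' := hr.ncard_pos
  have hcardl := Set.ncard_add_ncard_compl (Sum.inl ⁻¹' S)
  have hcardr := Set.ncard_add_ncard_compl (Sum.inr ⁻¹' S)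
  obtain ⟨a, ha⟩ := hl
  obtain ⟨b, hb⟩ := hr
  refine ⟨⟨⟨_, ha⟩, ?_⟩, ?_⟩
  · rintro (x | y) -
    · simp only [degIn_completeBipartiteGraph_inl, Set.preimage_compl]
      lia
    · simp only [degIn_completeBipartiteGraph_inr, Set.preimage_compl]
      lia
  · rintro (x | y) -
    · exact ⟨_, hb, by simp⟩
    · exact ⟨_, ha, by simp⟩

lemma psiG_completeBipartiteGraph [Finite α] [Finite β] (hα : 2 ≤ Nat.card α)
    (hαβ : Nat.card α ≤ Nat.card β) (hβ : Nat.card β ≤ 3) :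
    psiG (completeBipartiteGraph α β) = Nat.card α := by
  apply le_antisymm
  · obtain ⟨c, hc⟩ := exists_isAllianceColoring (completeBipartiteGraph α β)
    have hsurj : Function.Surjective (c ∘ Sum.inl) := fun i ↦
      (hc i).1.nonempty_preimage_inl hα
    simpa using Nat.card_le_card_of_surjective _ hsurj
  · obtain ⟨f, hf⟩ : ∃ f : β → α, Function.Surjective f := by
      have : Nonempty α := (Nat.card_pos_iff.mp (by lia)).1
      have := Fintype.ofFinite α
      have := Fintype.ofFinite β
      simp only [Nat.card_eq_fintype_card] at hαβ
      obtain ⟨g⟩ := Function.Embedding.nonempty_of_card_le hαβ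
      exact ⟨Function.invFun g, Function.invFun_surjective g.injective⟩
    have hc : IsAllianceColoring (completeBipartiteGraph α β) (Sum.elim id f) := fun a ↦
      isGlobalDefensiveAlliance_completeBipartiteGraph (hαβ.trans hβ) hβ ⟨a, rfl⟩ (hf a)
    exact hc.card_le_psiG

lemma two_le_card_of_completeBipartiteGraph [Finite α] [Finite β]
    (hγ : 2 ≤ gammaA (completeBipartiteGraph α β)) (hψ : 2 ≤ psiG (completeBipartiteGraph α β)) :
    2 ≤ Nat.card α ∧ 2 ≤ Nat.card β := by
  constructor
  · by_contra! hα
    have := Finite.card_le_one_iff_subsingleton.mp (Nat.le_of_lt_succ hα)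
    obtain ⟨x | y, hv, x' | y', hw, hvw⟩ := exists_adj_notMem_of_subsingleton hγ hψ
      (Set.subsingleton_of_subsingleton.image (Sum.inl : α → α ⊕ β) (s := Set.univ))
    all_goals simp at hv hw hvw
  · by_contra! hβ
    have := Finite.card_le_one_iff_subsingleton.mp (Nat.le_of_lt_succ hβ)
    obtain ⟨x | y, hv, x' | y', hw, hvw⟩ := exists_adj_notMem_of_subsingleton hγ hψ
      (Set.subsingleton_of_subsingleton.image (Sum.inr : β → α ⊕ β) (s := Set.univ))
    all_goals simp at hv hw hvw

lemma card_le_three_of_completeBipartiteGraph [Finite α] [Finite β] (hα : 2 ≤ Nat.card α)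
    (hβ : 2 ≤ Nat.card β) (hγ : gammaA (completeBipartiteGraph α β) = 2) :
    Nat.card α ≤ 3 ∧ Nat.card β ≤ 3 := by
  have : Nonempty (α ⊕ β) := nonempty_of_gammaA_ne_zero (hγ ▸ two_ne_zero)
  obtain ⟨S, ⟨hS, -⟩, hcard⟩ := exists_ncard_eq_gammaA (completeBipartiteGraph α β)
  have hl := (hS.nonempty_preimage_inl hα).ncard_pos
  have hr := (hS.nonempty_preimage_inr hβ).ncard_pos
  obtain ⟨a, ha⟩ := hS.nonempty_preimage_inl hα
  obtain ⟨b, hb⟩ := hS.nonempty_preimage_inr hβ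
  have hSa := hS.2 _ ha
  have hSb := hS.2 _ hb
  simp only [degIn_completeBipartiteGraph_inl, degIn_completeBipartiteGraph_inr,
    Set.preimage_compl] at hSa hSb
  have := Set.ncard_add_ncard_compl (Sum.inl ⁻¹' S)
  have := Set.ncard_add_ncard_compl (Sum.inr ⁻¹' S)
  have := ncard_preimage_inl_add_ncard_preimage_inr S
  lia

end CompleteBipartite

section ZeroDivisorGraph

variable {R R' : Type*} [CommRing R] [CommRing R']

lemma exists_ne_zero_mul_eq_zero_iff_not_isUnit [Finite R] {x : R} :
    (∃ y : R, y ≠ 0 ∧ x * y = 0) ↔ ¬IsUnit x := by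
  rw [isUnit_iff_mem_nonZeroDivisors_of_finite, mem_nonZeroDivisors_iff_right]
  push Not
  simp only [mul_comm x, and_comm]

lemma natCard_ZDV_add_one [Finite R] [Nontrivial R] :
    Nat.card (ZDV R) + 1 = Nat.card (nonunits R) := by
  have h : {x : R | x ≠ 0 ∧ ∃ y : R, y ≠ 0 ∧ x * y = 0} = nonunits R \ {0} := by
    ext x
    exact (and_congr_right' exists_ne_zero_mul_eq_zero_iff_not_isUnit).trans and_comm
  change Set.ncard {x : R | x ≠ 0 ∧ ∃ y : R, y ≠ 0 ∧ x * y = 0} + 1 = _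
  rw [h, Set.ncard_sdiff_singleton_add_one not_isUnit_zero, Nat.card_coe_set_eq]

/-- The isomorphism of zero-divisor graphs induced by a ring isomorphism. -/
def zdGraphIso (e : R ≃+* R') : zdGraph R ≃g zdGraph R' where
  toEquiv := e.toEquiv.subtypeEquiv fun x ↦ by
    simp [e.surjective.exists, ← map_mul]
  map_rel_iff' {x y} := by
    simp [zdGraph, ← map_mul, Subtype.ext_iff]

lemma zdGraph_prod_adj_iff_of_eq_one_zero {a z : ZDV (R × R')} (ha : a.1 = (1, 0)) :
    (zdGraph (R × R')).Adj a z ↔ z.1.1 = 0 := by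
  have hmul : a.1 * z.1 = (z.1.1, 0) := by ext <;> simp [ha]
  refine ⟨fun h ↦ congrArg Prod.fst (hmul.symm.trans h.2), fun hz ↦ ⟨?_, by simp [hmul, hz]⟩⟩
  rintro rfl
  rw [ha] at hz
  exact a.2.1 (ha.trans (Prod.ext hz rfl))

lemma natCard_subtype_ne_zero_add_one [Finite R] : Nat.card {x : R // x ≠ 0} + 1 = Nat.card R := by
  rw [← Finite.card_option, Nat.card_congr (Equiv.optionSubtypeNe 0)]

lemma nonempty_completeBipartiteGraph_iso_zdGraph_prod [IsDomain R] [IsDomain R'] :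
    Nonempty (completeBipartiteGraph {x : R // x ≠ 0} {y : R' // y ≠ 0} ≃g zdGraph (R × R')) := by
  let f : {x : R // x ≠ 0} ⊕ {y : R' // y ≠ 0} → ZDV (R × R') := Sum.elim
    (fun x ↦ ⟨(x, 0), by simpa using x.2, (0, 1), by simp, by simp⟩)
    (fun y ↦ ⟨(0, y), by simpa using y.2, (1, 0), by simp, by simp⟩)
  have hf : Function.Bijective f := by
    refine ⟨?_, ?_⟩
    · rintro (⟨x, hx⟩ | ⟨y, hy⟩) (⟨x', hx'⟩ | ⟨y', hy'⟩) h <;>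
        simp_all [f]
    · rintro ⟨⟨x, y⟩, hne, ⟨z, w⟩, hzw, hmul⟩
      have hxy : x = 0 ∨ y = 0 := by
        simp only [Prod.mk_mul_mk, Prod.mk_eq_zero, mul_eq_zero, ne_eq] at hmul hzw
        tauto
      rcases hxy with rfl | rfl
      · exact ⟨.inr ⟨y, by simpa using hne⟩, rfl⟩
      · exact ⟨.inl ⟨x, by simpa using hne⟩, rfl⟩
  refine ⟨⟨Equiv.ofBijective f hf, ?_⟩⟩
  rintro (⟨x, hx⟩ | ⟨y, hy⟩) (⟨x', hx'⟩ | ⟨y', hy'⟩) <;>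
    simp [f, zdGraph, *]

lemma natCard_mem_Icc_of_isDomain [Finite R] [Finite R'] [IsDomain R] [IsDomain R']
    (hγ : gammaA (zdGraph (R × R')) = 2) (hψ : 2 ≤ psiG (zdGraph (R × R'))) :
    Nat.card R ∈ Set.Icc 3 4 ∧ Nat.card R' ∈ Set.Icc 3 4 := by
  obtain ⟨f⟩ := nonempty_completeBipartiteGraph_iso_zdGraph_prod (R := R) (R' := R')
  rw [← gammaA_congr f] at hγ
  rw [← psiG_congr f] at hψ
  obtain ⟨h, h'⟩ := two_le_card_of_completeBipartiteGraph hγ.ge hψ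
  obtain ⟨_, _⟩ := card_le_three_of_completeBipartiteGraph h h' hγ
  rw [← natCard_subtype_ne_zero_add_one (R := R), ← natCard_subtype_ne_zero_add_one (R := R')]
  grind

lemma psiG_zdGraph_prod_add_one [Finite R] [Finite R'] [IsDomain R] [IsDomain R']
    (h : 3 ≤ Nat.card R) (hle : Nat.card R ≤ Nat.card R') (h' : Nat.card R' ≤ 4) :
    psiG (zdGraph (R × R')) + 1 = Nat.card R := by
  obtain ⟨f⟩ := nonempty_completeBipartiteGraph_iso_zdGraph_prod (R := R) (R' := R')
  rw [← natCard_subtype_ne_zero_add_one (R := R)] at h hle ⊢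
  rw [← natCard_subtype_ne_zero_add_one (R := R')] at hle h'
  rw [← psiG_congr f, psiG_completeBipartiteGraph (by lia) (by lia) (by lia)]

lemma card_le_encard_of_isDominatingSet_pi {ι : Type*} {R : ι → Type*} [∀ i, CommRing (R i)]
    [∀ i, Nontrivial (R i)] (hι : 3 ≤ ENat.card ι) {S : Set (ZDV (Π i, R i))}
    (hS : IsDominatingSet (zdGraph (Π i, R i)) S) : ENat.card ι ≤ S.encard := by
  -- The vertex `u i`, which is `1` away from `i`, is only annihilated by elements supported at `i`,
  -- so dominating all the `u i` takes a separate element of `S` for each `i`.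
  have hthird := ENat.exists_ne_ne_of_three_le hι
  let u (i : ι) : ZDV (Π i, R i) := ⟨1 - Pi.single i 1, by
      obtain ⟨k, hk, -⟩ := hthird i i
      exact fun h ↦ by simpa [hk] using congrFun h k,
    Pi.single i 1, by simp, by simp [sub_mul, ← Pi.single_mul]⟩
  have hu_self (i : ι) : (u i).1 i = 0 := by simp [u]
  have hu_ne {i k : ι} (hk : k ≠ i) : (u i).1 k = 1 := by simp [u, hk]
  have hdom (i : ι) : ∃ d : S, d = u i ∨ ∀ k ≠ i, d.1.1 k = 0 := by
    by_cases hi : u i ∈ S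
    · exact ⟨⟨u i, hi⟩, .inl rfl⟩
    · obtain ⟨d, hd, -, hmul⟩ := hS _ hi
      refine ⟨⟨d, hd⟩, .inr fun k hk ↦ ?_⟩
      simpa [hu_ne hk] using congrFun hmul k
  choose d hd using hdom
  suffices hinj : Function.Injective d from ENat.card_le_card_of_injective hinj
  intro i j hij
  by_contra hne
  obtain ⟨k, hki, hkj⟩ := hthird i j
  have hi := hd i
  rw [hij] at hi
  rcases hi, hd j with ⟨hi | hi, hj | hj⟩
  · have := hu_self i
    rw [← hi, hj, hu_ne hne] at this
    exact one_ne_zero this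
  · have := hj k hkj
    rw [hi, hu_ne hki] at this
    exact one_ne_zero this
  · have := hi k hki
    rw [hj, hu_ne hkj] at this
    exact one_ne_zero this
  · refine (d j).1.2.1 (funext fun l ↦ ?_)
    by_cases hl : l = i
    · exact hj l (hl ▸ hne)
    · exact hi l hl

lemma natCard_maximalSpectrum_le_two [Finite R] (hγ : gammaA (zdGraph R) = 2) :
    Nat.card (MaximalSpectrum R) ≤ 2 := by
  by_contra! hcard
  let e : R ≃+* Π I : MaximalSpectrum R, Localization.AtPrime I.asIdeal :=
    (MaximalSpectrum.toPiLocalizationEquiv R).toRingEquiv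
  have := Finite.of_equiv R e.toEquiv
  rw [gammaA_congr (zdGraphIso e)] at hγ
  have := nonempty_of_gammaA_ne_zero (hγ ▸ two_ne_zero)
  obtain ⟨S, hS, hS_card⟩ := exists_ncard_eq_gammaA
    (zdGraph (Π I : MaximalSpectrum R, Localization.AtPrime I.asIdeal))
  have hle := card_le_encard_of_isDominatingSet_pi
    (by rw [ENat.card_eq_coe_natCard]; exact_mod_cast hcard) hS.2
  rw [ENat.card_eq_coe_natCard, ← S.toFinite.cast_ncard_eq, Nat.cast_le] at hle
  lia

end ZeroDivisorGraph

section FiniteRings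

open IsLocalRing Polynomial

lemma isLocalRing_or_exists_ringEquiv_prod {R : Type*} [CommRing R] [Nontrivial R] [Finite R]
    (h : Nat.card (MaximalSpectrum R) ≤ 2) :
    IsLocalRing R ∨ ∃ I J : MaximalSpectrum R,
      Nonempty (R ≃+* Localization.AtPrime I.asIdeal × Localization.AtPrime J.asIdeal) := by
  by_cases hone : Nat.card (MaximalSpectrum R) ≤ 1
  · have := Finite.card_le_one_iff_subsingleton.mp hone
    exact .inl (.of_singleton_maximalSpectrum)
  · let σ : MaximalSpectrum R ≃ Fin 2 := Finite.equivFinOfCardEq (by lia)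
    let e : R ≃+* Π I : MaximalSpectrum R, Localization.AtPrime I.asIdeal :=
      (MaximalSpectrum.toPiLocalizationEquiv R).toRingEquiv
    exact .inr ⟨_, _, ⟨e.trans <| (RingEquiv.piCongrLeft' _ σ).trans (RingEquiv.piFinTwo _)⟩⟩

variable {R : Type*} [CommRing R] {p : ℕ}

lemma natCard_add_one_mul_natCard_maximalIdeal_le {A B : Type*} [CommRing A] [Nontrivial A]
    [Finite A] [CommRing B] [IsLocalRing B] [Finite B] :
    (Nat.card A + 1) * Nat.card (maximalIdeal B) ≤ Nat.card (ZDV (A × B)) + 1 := by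
  let f : (A × maximalIdeal B) ⊕ maximalIdeal B → A × B :=
    Sum.elim (fun z ↦ (z.1, z.2)) (fun y ↦ (0, 1 + y))
  have hmem (z) : f z ∈ nonunits (A × B) := by
    rcases z with ⟨a, x⟩ | y
    · exact fun h ↦ x.2 (Prod.isUnit_iff.mp h).2
    · exact fun h ↦ not_isUnit_zero (Prod.isUnit_iff.mp h).1
  have hone (x y : maximalIdeal B) : (x : B) ≠ 1 + y := fun h ↦
    Ideal.one_notMem (maximalIdeal B) (by simpa [h] using sub_mem x.2 y.2)
  have hf : Function.Injective f := by
    rintro (⟨a, x⟩ | y) (⟨a', x'⟩ | y') h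
    · simpa [f] using h
    · simp [f, hone] at h
    · simp [f, (hone _ _).symm] at h
    · simpa [f] using h
  calc
    (Nat.card A + 1) * Nat.card (maximalIdeal B)
      = Nat.card ((A × maximalIdeal B) ⊕ maximalIdeal B) := by
        rw [Nat.card_sum, Nat.card_prod, add_mul, one_mul]
    _ ≤ Nat.card (nonunits (A × B)) := Nat.card_le_card_of_injective _ (hf.codRestrict hmem)
    _ = Nat.card (ZDV (A × B)) + 1 := natCard_ZDV_add_one.symm

lemma isPrimePow_natCard_of_isLocalRing [IsLocalRing R] [Finite R] : IsPrimePow (Nat.card R) := by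
  have hmem {q : ℕ} (hq : q.Prime) (hdvd : q ∣ Nat.card R) : (q : R) ∈ maximalIdeal R := by
    have := Fact.mk hq
    obtain ⟨x, hx⟩ := exists_prime_addOrderOf_dvd_card' q hdvd
    intro hunit
    have hx0 : x = 0 := by
      rw [← hunit.mul_right_eq_zero, ← nsmul_eq_mul, ← hx, addOrderOf_nsmul_eq_zero]
    rw [hx0, addOrderOf_zero] at hx
    exact hq.one_lt.ne hx
  obtain ⟨p, hp, hpR⟩ := Nat.exists_prime_and_dvd (Finite.one_lt_card (α := R)).ne'
  refine (isPrimePow_iff_unique_prime_dvd).mpr ⟨p, ⟨hp, hpR⟩, fun q ⟨hq, hqR⟩ ↦ ?_⟩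
  by_contra hne
  obtain ⟨a, b, hab⟩ := ((Nat.coprime_primes hq hp).mpr hne).cast (R := R)
  refine Ideal.one_notMem (maximalIdeal R) ?_
  rw [← hab]
  exact add_mem (Ideal.mul_mem_left _ _ (hmem hq hqR)) (Ideal.mul_mem_left _ _ (hmem hp hpR))

lemma natCard_ideal_dvd_of_le [Finite R] {I J : Ideal R} (h : I ≤ J) : Nat.card I ∣ Nat.card J :=
  AddSubgroup.card_dvd_of_le (H := I.toAddSubgroup) (K := J.toAddSubgroup) h

lemma ideal_eq_of_le_of_natCard_le [Finite R] {I J : Ideal R} (h : I ≤ J)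
    (hcard : Nat.card J ≤ Nat.card I) : I = J :=
  SetLike.coe_injective (Set.eq_of_subset_of_ncard_le h hcard)

lemma natCard_ideal_ne_one_iff {I : Ideal R} : Nat.card I ≠ 1 ↔ I ≠ ⊥ := by
  rw [Ne, Nat.card_eq_one_iff_unique, and_iff_left ⟨0⟩, Submodule.subsingleton_iff_eq_bot]

lemma span_singleton_eq_maximalIdeal [IsLocalRing R] [Finite R]
    (hp : (Nat.card (maximalIdeal R)).Prime) {x : R} (hx : x ∈ maximalIdeal R) (hx0 : x ≠ 0) :
    Ideal.span {x} = maximalIdeal R := by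
  have hle : Ideal.span {x} ≤ maximalIdeal R := by simpa using hx
  refine ideal_eq_of_le_of_natCard_le hle ?_
  refine (((Nat.dvd_prime hp).mp (natCard_ideal_dvd_of_le hle)).resolve_left ?_).ge
  simpa [natCard_ideal_ne_one_iff] using hx0

lemma mul_eq_zero_of_mem_maximalIdeal [IsLocalRing R] [Finite R]
    (hp : (Nat.card (maximalIdeal R)).Prime) {x y : R} (hx : x ∈ maximalIdeal R)
    (hy : y ∈ maximalIdeal R) : x * y = 0 := by
  by_contra hxy
  have hspan := span_singleton_eq_maximalIdeal hp (Ideal.mul_mem_left _ x hy) hxy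
  obtain ⟨r, hr⟩ := Ideal.mem_span_singleton'.mp (hspan ▸ hx)
  have hunit : IsUnit (1 - r * y) := isUnit_one_sub_self_of_mem_nonunits _ <|
    Ideal.mul_mem_left (maximalIdeal R) r hy
  have hx0 : x = 0 := (hunit.mul_left_eq_zero).mp (by linear_combination -hr)
  exact hxy (by rw [hx0, zero_mul])

lemma natCard_eq_sq_of_natCard_maximalIdeal [IsLocalRing R] [Finite R]
    (hp : (Nat.card (maximalIdeal R)).Prime) : Nat.card R = Nat.card (maximalIdeal R) ^ 2 := by
  obtain ⟨w, hw, hw0⟩ := (Submodule.ne_bot_iff _).mp (natCard_ideal_ne_one_iff.mp hp.ne_one)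
  have htorsion : Ideal.torsionOf R R w = maximalIdeal R := by
    refine le_antisymm (le_maximalIdeal ?_) fun x hx ↦ mul_eq_zero_of_mem_maximalIdeal hp hx hw
    simpa [Ideal.ne_top_iff_one] using hw0
  have e := Ideal.quotTorsionOfEquivSpanSingleton R R w
  rw [htorsion] at e
  rw [Submodule.card_eq_card_quotient_mul_card (maximalIdeal R), Nat.card_congr e.toEquiv, sq]
  exact congrArg (fun I : Ideal R ↦ _ * Nat.card I) (span_singleton_eq_maximalIdeal hp hw hw0)

lemma natCard_ideal_eq_of_natCard_eq_sq [Finite R] (hp : p.Prime) (hcard : Nat.card R = p ^ 2)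
    {I : Ideal R} (hbot : I ≠ ⊥) (htop : I ≠ ⊤) : Nat.card I = p := by
  have hdvd : Nat.card I ∣ p ^ 2 := hcard ▸ I.toAddSubgroup.card_addSubgroup_dvd_card
  obtain ⟨k, hk, hI⟩ := (Nat.dvd_prime_pow hp).mp hdvd
  interval_cases k
  · exact absurd hI (natCard_ideal_ne_one_iff.mpr hbot)
  · rw [hI, pow_one]
  · refine absurd (ideal_eq_of_le_of_natCard_le le_top ?_) htop
    rw [hI, ← hcard]
    exact Finite.card_subtype_le _

lemma isLocalRing_of_natCard_eq_sq [Finite R] (hp : p.Prime) (hcard : Nat.card R = p ^ 2) {w : R}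
    (hw0 : w ≠ 0) (hw : w * w = 0) : IsLocalRing R := by
  have : Nontrivial R := ⟨w, 0, hw0⟩
  have hbot : Ideal.span {w} ≠ ⊥ := by simpa using hw0
  have huniq (J : Ideal R) (hJ : J.IsMaximal) : Ideal.span {w} = J := by
    have hle : Ideal.span {w} ≤ J := by
      rw [Ideal.span_singleton_le_iff_mem]
      exact (hJ.isPrime.mem_or_mem (hw ▸ J.zero_mem)).elim id id
    have hJcard := natCard_ideal_eq_of_natCard_eq_sq hp hcard (ne_bot_of_le_ne_bot hbot hle)
      hJ.ne_top
    have hwcard := natCard_ideal_eq_of_natCard_eq_sq hp hcard hbot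
      (ne_top_of_le_ne_top hJ.ne_top hle)
    exact ideal_eq_of_le_of_natCard_le hle (by rw [hJcard, hwcard])
  obtain ⟨M, hM⟩ := Ideal.exists_maximal R
  exact .of_unique_max_ideal ⟨M, hM, fun J hJ ↦ (huniq J hJ).symm.trans (huniq M hM)⟩

lemma natCard_maximalIdeal_of_natCard_eq_sq [IsLocalRing R] [Finite R] (hp : p.Prime)
    (hcard : Nat.card R = p ^ 2) {w : R} (hw0 : w ≠ 0) (hw : w * w = 0) :
    Nat.card (maximalIdeal R) = p := by
  refine natCard_ideal_eq_of_natCard_eq_sq hp hcard ?_ Ideal.IsPrime.ne_top'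
  refine (Submodule.ne_bot_iff _).mpr ⟨w, fun hunit ↦ hw0 ?_, hw0⟩
  exact hunit.mul_left_eq_zero.mp hw

lemma zdGraph_eq_top [IsLocalRing R] [Finite R] (hp : (Nat.card (maximalIdeal R)).Prime) :
    zdGraph R = ⊤ := by
  ext x y
  have hmem (z : ZDV R) : z.1 ∈ maximalIdeal R :=
    exists_ne_zero_mul_eq_zero_iff_not_isUnit.mp z.2.2
  simp [zdGraph, mul_eq_zero_of_mem_maximalIdeal hp (hmem x) (hmem y)]

lemma psiG_zdGraph_eq_two_of_natCard_eq_sq [Finite R] (hp : p.Prime) (hodd : Odd p)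
    (hcard : Nat.card R = p ^ 2) {w : R} (hw0 : w ≠ 0) (hw : w * w = 0) :
    psiG (zdGraph R) = 2 := by
  have := isLocalRing_of_natCard_eq_sq hp hcard hw0 hw
  have hm := natCard_maximalIdeal_of_natCard_eq_sq hp hcard hw0 hw
  have : Nonempty (ZDV R) := ⟨w, hw0, w, hw0, hw⟩
  have hZDV : Nat.card (ZDV R) + 1 = p := natCard_ZDV_add_one.trans hm
  rw [zdGraph_eq_top (hm ▸ hp)]
  exact psiG_top_of_even (by grind)

lemma ker_aeval_eq_span_X_sq {F : Type*} [Field F] [Algebra F R] {w : R} (hw0 : w ≠ 0)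
    (hw : w * w = 0) : RingHom.ker (aeval (R := F) w) = Ideal.span {X ^ 2} := by
  have : Nontrivial R := ⟨w, 0, hw0⟩
  have hroot : aeval w (X ^ 2 : F[X]) = 0 := by simpa [sq] using hw
  obtain ⟨k, hk, hassoc⟩ := (dvd_prime_pow prime_X 2).mp (minpoly.dvd F w hroot)
  have hpow : w ^ k = 0 := by
    obtain ⟨g, hg⟩ := hassoc.dvd
    rw [← aeval_X_pow (R := F), hg, map_mul, minpoly.aeval, zero_mul]
  have hk2 : k = 2 := by
    interval_cases k
    · simp at hpow
    · simp [hw0] at hpow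
    · rfl
  rw [minpoly.ker_aeval_eq_span_minpoly, ← hk2]
  exact Ideal.span_singleton_eq_span_singleton.mpr hassoc

lemma natCard_quotient_X_sq (F : Type*) [Field F] :
    Nat.card (F[X] ⧸ Ideal.span {(X : F[X]) ^ 2}) = Nat.card F ^ 2 := by
  have := (monic_X_pow (R := F) 2).finite_quotient
  rw [Module.natCard_eq_pow_finrank (K := F), finrank_quotient_span_eq_natDegree, natDegree_X_pow]

lemma nonempty_ringEquiv_quotient_X_sq {F : Type*} [Field F] [Algebra F R] [Finite R]
    (hcard : Nat.card R = Nat.card F ^ 2) {w : R} (hw0 : w ≠ 0) (hw : w * w = 0) :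
    Nonempty (R ≃+* F[X] ⧸ Ideal.span {(X : F[X]) ^ 2}) := by
  have hker := ker_aeval_eq_span_X_sq (F := F) hw0 hw
  have hbij : Function.Bijective (RingHom.kerLift (aeval (R := F) w).toRingHom) := by
    refine (Nat.bijective_iff_injective_and_card _).mpr ⟨RingHom.kerLift_injective _, ?_⟩
    rw [hcard, ← natCard_quotient_X_sq, ← hker]
    rfl
  exact ⟨(RingEquiv.ofBijective _ hbij).symm.trans (Ideal.quotEquivOfEq hker)⟩

lemma nonempty_ringEquiv_of_natCard_eq_sq [Finite R] (hp : p.Prime) (hcard : Nat.card R = p ^ 2)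
    {w : R} (hw0 : w ≠ 0) (hw : w * w = 0) :
    Nonempty (R ≃+* ZMod (p ^ 2)) ∨
      Nonempty (R ≃+* (ZMod p)[X] ⧸ Ideal.span {(X : (ZMod p)[X]) ^ 2}) := by
  have : Nontrivial R := ⟨w, 0, hw0⟩
  have := Fintype.ofFinite R
  have hcast : ((p ^ 2 : ℕ) : R) = 0 := by
    rw [← hcard, Nat.card_eq_fintype_card, Nat.cast_card_eq_zero]
  obtain ⟨k, hk, hchar⟩ := (Nat.dvd_prime_pow hp).mp (ringChar.dvd hcast)
  have hcharP : CharP R (p ^ k) := hchar ▸ ringChar.charP R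
  interval_cases k
  · exact absurd (CharP.ringChar_ne_one (R := R)) (by simpa using hchar)
  · have := Fact.mk hp
    rw [pow_one] at hcharP
    let _ := ZMod.algebra R p
    exact .inr (nonempty_ringEquiv_quotient_X_sq (by rw [hcard, Nat.card_zmod]) hw0 hw)
  · exact .inl ⟨(ZMod.ringEquiv R (by rw [← Nat.card_eq_fintype_card, hcard])).symm⟩

lemma exists_mul_self_eq_zero_quotient_X_sq (F : Type*) [Field F] :
    ∃ w : F[X] ⧸ Ideal.span {(X : F[X]) ^ 2}, w ≠ 0 ∧ w * w = 0 := by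
  refine ⟨Ideal.Quotient.mk _ X, ?_, ?_⟩
  · rw [Ne, Ideal.Quotient.eq_zero_iff_mem, Ideal.mem_span_singleton]
    nth_rw 2 [← pow_one (X : F[X])]
    rw [pow_dvd_pow_iff X_ne_zero not_isUnit_X]
    decide
  · rw [← map_mul, ← sq, Ideal.Quotient.mk_singleton_self]

lemma exists_mul_self_eq_zero_zmod (hp : p.Prime) :
    ∃ w : ZMod (p ^ 2), w ≠ 0 ∧ w * w = 0 := by
  refine ⟨p, ?_, ?_⟩
  · rw [Ne, ZMod.natCast_eq_zero_iff]
    nth_rw 2 [← pow_one p]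
    rw [Nat.pow_dvd_pow_iff_le_right hp.one_lt]
    decide
  · rw [← Nat.cast_mul, ← sq, ZMod.natCast_self]

end FiniteRings

section Classification

open IsLocalRing Polynomial

variable {R A B : Type*} [CommRing R] [CommRing A] [CommRing B]

lemma zdGraph_prod_adj_iff_of_eq_zero [Finite B] [IsLocalRing B]
    (hp : (Nat.card (maximalIdeal B)).Prime)
    {b z : ZDV (A × B)} {w : B} (hw : w ∈ maximalIdeal B) (hb : b.1 = (0, w)) :
    (zdGraph (A × B)).Adj b z ↔ b ≠ z ∧ ¬IsUnit z.1.2 := by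
  have hw0 : w ≠ 0 := by
    rintro rfl
    exact b.2.1 hb
  have hmul : w * z.1.2 = 0 ↔ ¬IsUnit z.1.2 :=
    ⟨fun h hz ↦ hw0 (hz.mul_left_eq_zero.mp h),
      fun hz ↦ mul_eq_zero_of_mem_maximalIdeal hp hw hz⟩
  simp [zdGraph, hb, ← hmul, Prod.ext_iff]

/-- The list of rings, up to isomorphism, with `γ_a(Γ(R)) = ψ_g(Γ(R)) = 2`. -/
def IsPsiGTwoRing (R : Type*) [CommRing R] : Prop :=
  Nonempty (R ≃+* ZMod 2 × ZMod 4) ∨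
    Nonempty (R ≃+* ZMod 2 × ((ZMod 2)[X] ⧸ Ideal.span {(X : (ZMod 2)[X]) ^ 2})) ∨
    Nonempty (R ≃+* ZMod 3 × ZMod 3) ∨
    Nonempty (R ≃+* ZMod 3 × GaloisField 2 2) ∨
    Nonempty (R ≃+* ZMod 25) ∨
    Nonempty (R ≃+* (ZMod 5)[X] ⧸ Ideal.span {(X : (ZMod 5)[X]) ^ 2})

lemma IsPsiGTwoRing.of_ringEquiv (e : A ≃+* B) : IsPsiGTwoRing B → IsPsiGTwoRing A := by
  have htrans {C : Type} [CommRing C] : Nonempty (B ≃+* C) → Nonempty (A ≃+* C) :=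
    .map e.trans
  exact .imp htrans (.imp htrans (.imp htrans (.imp htrans (.imp htrans htrans))))

variable [Finite R] [Finite A] [Finite B]

lemma exists_ne_zero_mul_self_eq_zero_of_isLocalRing [IsLocalRing R]
    (hp : (Nat.card (maximalIdeal R)).Prime) : ∃ w : R, w ≠ 0 ∧ w * w = 0 := by
  obtain ⟨w, hw, hw0⟩ := (Submodule.ne_bot_iff _).mp (natCard_ideal_ne_one_iff.mp hp.ne_one)
  exact ⟨w, hw0, mul_eq_zero_of_mem_maximalIdeal hp hw hw⟩

lemma nonempty_ringEquiv_of_natCard_eq [IsDomain A] [IsDomain B] (h : Nat.card A = Nat.card B) :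
    Nonempty (A ≃+* B) := by
  have := Fintype.ofFinite A
  have := Fintype.ofFinite B
  let _ := Fintype.fieldOfDomain A
  let _ := Fintype.fieldOfDomain B
  exact ⟨FiniteField.ringEquivOfCardEq (by simpa [Nat.card_eq_fintype_card] using h)⟩

lemma nonempty_ringEquiv_zmod_of_natCard_eq {p : ℕ} (hp : p.Prime) (h : Nat.card R = p) :
    Nonempty (R ≃+* ZMod p) := by
  have := Fintype.ofFinite R
  exact ⟨(ZMod.ringEquivOfPrime R hp (by rw [← Nat.card_eq_fintype_card, h])).symm⟩

lemma exists_not_isUnit_iff_eq_zero_or_eq [IsLocalRing B] (hB : Nat.card (maximalIdeal B) = 2) :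
    ∃ w : B, w ≠ 0 ∧ w * w = 0 ∧ ∀ y, ¬IsUnit y ↔ y = 0 ∨ y = w := by
  obtain ⟨w, hw0, hw⟩ := exists_ne_zero_mul_self_eq_zero_of_isLocalRing (hB ▸ Nat.prime_two)
  have hwm : w ∈ maximalIdeal B := fun hunit ↦ hw0 (hunit.mul_left_eq_zero.mp hw)
  have hpair : {0, w} = (maximalIdeal B : Set B) :=
    Set.eq_of_subset_of_ncard_le (Set.pair_subset (zero_mem _) hwm)
      (by rw [Set.ncard_pair hw0.symm]; exact hB.le)
  exact ⟨w, hw0, hw, fun y ↦ (Set.ext_iff.mp hpair y).symm⟩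

lemma ncard_isUnit_eq_two [IsLocalRing B] (hB : Nat.card (maximalIdeal B) = 2) :
    {y : B | IsUnit y}.ncard = 2 := by
  have hcard := natCard_eq_sq_of_natCard_maximalIdeal (hB ▸ Nat.prime_two)
  have hcompl : {y : B | IsUnit y}ᶜ.ncard = 2 := hB
  have := Set.ncard_add_ncard_compl {y : B | IsUnit y}
  rw [hB] at hcard
  lia

lemma eq_zero_or_eq_one_of_natCard_eq_two (hA : Nat.card A = 2) (x : A) : x = 0 ∨ x = 1 := by
  have : Nontrivial A := Finite.one_lt_card_iff_nontrivial.mp (by lia)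
  obtain ⟨y, -, hy⟩ := (Nat.card_eq_two_iff' (0 : A)).mp hA
  exact or_iff_not_imp_left.mpr fun hx ↦ (hy x hx).trans (hy 1 one_ne_zero).symm

lemma eq_or_isUnit_of_notMem_pair (hA : Nat.card A = 2) {a b z : ZDV (A × B)} {w : B}
    (ha : a.1 = (1, 0)) (hb : b.1 = (0, w)) (hw : ∀ y, ¬IsUnit y ↔ y = 0 ∨ y = w)
    (hz : z ∉ ({a, b} : Set (ZDV (A × B)))) : z.1 = (1, w) ∨ z.1.1 = 0 ∧ IsUnit z.1.2 := by
  simp only [Set.mem_insert_iff, Set.mem_singleton_iff, Subtype.ext_iff, ha, hb, not_or] at hz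
  obtain ⟨⟨x, y⟩, hz0, hnonunit⟩ := z
  rw [exists_ne_zero_mul_eq_zero_iff_not_isUnit, Prod.isUnit_iff, not_and] at hnonunit
  rcases eq_zero_or_eq_one_of_natCard_eq_two hA x with rfl | rfl
  · refine .inr ⟨rfl, by_contra fun hy ↦ ?_⟩
    rcases (hw y).mp hy with rfl | rfl
    exacts [hz0 rfl, hz.2 rfl]
  · rcases (hw y).mp (hnonunit isUnit_one) with rfl | rfl
    exacts [absurd rfl hz.1, .inl rfl]

lemma isDefensiveAlliance_pair [IsLocalRing B] (hA : Nat.card A = 2)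
    (hB : Nat.card (maximalIdeal B) = 2) {a b : ZDV (A × B)} {w : B}
    (ha : a.1 = (1, 0)) (hb : b.1 = (0, w)) (hw : ∀ y, ¬IsUnit y ↔ y = 0 ∨ y = w) :
    IsDefensiveAlliance (zdGraph (A × B)) {a, b} := by
  have : Nontrivial A := Finite.one_lt_card_iff_nontrivial.mp (by lia)
  have hadj_a {z} := zdGraph_prod_adj_iff_of_eq_one_zero (z := z) ha
  have hadj_b {z} := zdGraph_prod_adj_iff_of_eq_zero (hB ▸ Nat.prime_two) ((hw w).mpr (.inr rfl))
    (z := z) hb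
  have hcompl {z} (hz : z ∈ ({a, b} : Set (ZDV (A × B)))ᶜ) :=
    eq_or_isUnit_of_notMem_pair hA ha hb hw hz
  refine ⟨⟨a, .inl rfl⟩, ?_⟩
  simp only [Set.mem_insert_iff, Set.mem_singleton_iff, forall_eq_or_imp, forall_eq]
  constructor
  · have hout : degIn (zdGraph (A × B)) {a, b}ᶜ a ≤ 2 := by
      rw [← ncard_isUnit_eq_two hB]
      refine Set.ncard_le_ncard_of_injOn (fun z ↦ z.1.2) (fun z hz ↦ ?_) (fun z hz z' hz' h ↦ ?_)
      · have hz0 := hadj_a.mp hz.2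
        exact ((hcompl hz.1).resolve_left fun h ↦ by simp [h] at hz0).2
      · exact Subtype.ext (Prod.ext ((hadj_a.mp hz.2).trans (hadj_a.mp hz'.2).symm) h)
    have hin : 0 < degIn (zdGraph (A × B)) {a, b} a :=
      (Set.ncard_pos (Set.toFinite _)).mpr ⟨b, .inr rfl, hadj_a.mpr (congrArg Prod.fst hb)⟩
    lia
  · refine le_add_left ((Set.ncard_le_one (Set.toFinite _)).mpr fun z hz z' hz' ↦ Subtype.ext ?_)
    rw [(hcompl hz.1).resolve_right fun h ↦ (hadj_b.mp hz.2).2 h.2,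
      (hcompl hz'.1).resolve_right fun h ↦ (hadj_b.mp hz'.2).2 h.2]

lemma exists_neighborSet_eq_singleton_of_notMem_pair [IsLocalRing B] (hA : Nat.card A = 2)
    (hB : Nat.card (maximalIdeal B) = 2) {a b z : ZDV (A × B)} {w : B}
    (ha : a.1 = (1, 0)) (hb : b.1 = (0, w)) (hw : ∀ y, ¬IsUnit y ↔ y = 0 ∨ y = w)
    (hz : z ∉ ({a, b} : Set (ZDV (A × B)))) :
    ∃ u ∈ ({a, b} : Set (ZDV (A × B))), (zdGraph (A × B)).neighborSet z = {u} := by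
  have hwm : w ∈ maximalIdeal B := (hw w).mpr (.inr rfl)
  have hbz : b ≠ z := fun h ↦ hz (.inr h.symm)
  rcases eq_or_isUnit_of_notMem_pair hA ha hb hw hz with hz_eq | ⟨hz0, hz_unit⟩
  · have hadj : (zdGraph (A × B)).Adj b z := by
      rw [zdGraph_prod_adj_iff_of_eq_zero (hB ▸ Nat.prime_two) hwm hb, hz_eq]
      exact ⟨hbz, hwm⟩
    refine ⟨b, .inr rfl, Set.eq_singleton_iff_unique_mem.mpr ⟨hadj.symm, ?_⟩⟩
    rintro ⟨⟨x, y⟩, hxy0, hxy⟩ ⟨-, hmul⟩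
    rw [hz_eq, Prod.mk_mul_mk, one_mul, Prod.mk_eq_zero] at hmul
    obtain ⟨rfl, hwy⟩ := hmul
    have hy : ¬IsUnit y := fun h ↦ b.2.1 (by rw [hb, h.mul_left_eq_zero.mp hwy]; rfl)
    rcases (hw y).mp hy with rfl | rfl
    exacts [absurd rfl hxy0, Subtype.ext hb.symm]
  · have hadj : (zdGraph (A × B)).Adj a z := (zdGraph_prod_adj_iff_of_eq_one_zero ha).mpr hz0
    refine ⟨a, .inl rfl, Set.eq_singleton_iff_unique_mem.mpr ⟨hadj.symm, ?_⟩⟩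
    rintro ⟨⟨x, y⟩, hxy0, hxy⟩ ⟨-, hmul⟩
    obtain rfl : y = 0 := hz_unit.mul_right_eq_zero.mp (congrArg Prod.snd hmul)
    rcases eq_zero_or_eq_one_of_natCard_eq_two hA x with rfl | rfl
    exacts [absurd rfl hxy0, Subtype.ext ha.symm]

lemma psiG_zdGraph_prod_eq_two [IsLocalRing B] (hA : Nat.card A = 2)
    (hB : Nat.card (maximalIdeal B) = 2) : psiG (zdGraph (A × B)) = 2 := by
  have : Nontrivial A := Finite.one_lt_card_iff_nontrivial.mp (by lia)
  obtain ⟨w, hw0, hw, hnonunit⟩ := exists_not_isUnit_iff_eq_zero_or_eq hB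
  have hwm : w ∈ maximalIdeal B := (hnonunit w).mpr (.inr rfl)
  let a : ZDV (A × B) := ⟨(1, 0), by simp, (0, 1), by simp, by simp⟩
  let b : ZDV (A × B) := ⟨(0, w), by simpa using hw0, (1, 0), by simp, by simp⟩
  let c : ZDV (A × B) := ⟨(1, w), by simp, (0, w), by simpa using hw0, by simpa using hw⟩
  let d : ZDV (A × B) := ⟨(0, 1), by simp, (1, 0), by simp, by simp⟩
  have hc : c ∉ ({a, b} : Set (ZDV (A × B))) := by simp [a, b, c, hw0]
  have hd : d ∉ ({a, b} : Set (ZDV (A × B))) := by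
    have hw1 : 1 ≠ w := fun h ↦ hwm (h ▸ isUnit_one)
    simp [a, b, d, hw1]
  refine psiG_eq_two_of_leaves (isDefensiveAlliance_pair hA hB rfl rfl hnonunit) ⟨c, hc⟩
    (fun z ↦ exists_neighborSet_eq_singleton_of_notMem_pair hA hB rfl rfl hnonunit) ?_
  rintro _ (rfl | rfl)
  · exact ⟨d, hd, (zdGraph_prod_adj_iff_of_eq_one_zero rfl).mpr rfl⟩
  · exact ⟨c, hc, fun h ↦ hc (.inr h.symm), by simp [b, c, hw]⟩

lemma psiG_zdGraph_prod_eq_two_of_natCard_eq_sq (hA : Nat.card A = 2) (hB : Nat.card B = 2 ^ 2)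
    {w : B} (hw0 : w ≠ 0) (hw : w * w = 0) : psiG (zdGraph (A × B)) = 2 := by
  have := isLocalRing_of_natCard_eq_sq Nat.prime_two hB hw0 hw
  exact psiG_zdGraph_prod_eq_two hA
    (natCard_maximalIdeal_of_natCard_eq_sq Nat.prime_two hB hw0 hw)

lemma natCard_galoisField_two_two : Nat.card (GaloisField 2 2) = 4 :=
  GaloisField.card 2 2 two_ne_zero

lemma nonempty_ringEquiv_galoisField_of_natCard_eq_four [IsDomain R] (h : Nat.card R = 4) :
    Nonempty (R ≃+* GaloisField 2 2) :=
  nonempty_ringEquiv_of_natCard_eq (h.trans natCard_galoisField_two_two.symm)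

lemma IsPsiGTwoRing.psiG_eq_two (h : IsPsiGTwoRing R) : psiG (zdGraph R) = 2 := by
  have : Fact (Nat.Prime 5) := ⟨Nat.prime_five⟩
  have hcard (p : ℕ) [Fact p.Prime] :
      Nat.card ((ZMod p)[X] ⧸ Ideal.span {(X : (ZMod p)[X]) ^ 2}) = p ^ 2 := by
    rw [natCard_quotient_X_sq (ZMod p), Nat.card_zmod]
  rcases h with ⟨⟨e⟩⟩ | ⟨⟨e⟩⟩ | ⟨⟨e⟩⟩ | ⟨⟨e⟩⟩ | ⟨⟨e⟩⟩ | ⟨⟨e⟩⟩ <;>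
    rw [psiG_congr (zdGraphIso e)]
  · obtain ⟨w, hw0, hw⟩ := exists_mul_self_eq_zero_zmod Nat.prime_two
    exact psiG_zdGraph_prod_eq_two_of_natCard_eq_sq (Nat.card_zmod 2) (Nat.card_zmod 4) hw0 hw
  · obtain ⟨w, hw0, hw⟩ := exists_mul_self_eq_zero_quotient_X_sq (ZMod 2)
    have := Nat.finite_of_card_ne_zero ((hcard 2).trans_ne (by norm_num))
    exact psiG_zdGraph_prod_eq_two_of_natCard_eq_sq (Nat.card_zmod 2) (hcard 2) hw0 hw
  · have := psiG_zdGraph_prod_add_one (R := ZMod 3) (R' := ZMod 3)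
    simp only [Nat.card_zmod] at this
    lia
  · have := psiG_zdGraph_prod_add_one (R := ZMod 3) (R' := GaloisField 2 2)
    simp only [Nat.card_zmod, natCard_galoisField_two_two] at this
    lia
  · obtain ⟨w, hw0, hw⟩ := exists_mul_self_eq_zero_zmod Nat.prime_five
    exact psiG_zdGraph_eq_two_of_natCard_eq_sq Nat.prime_five (by decide) (Nat.card_zmod 25)
      hw0 hw
  · obtain ⟨w, hw0, hw⟩ := exists_mul_self_eq_zero_quotient_X_sq (ZMod 5)
    have := Nat.finite_of_card_ne_zero ((hcard 5).trans_ne (by norm_num))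
    exact psiG_zdGraph_eq_two_of_natCard_eq_sq Nat.prime_five (by decide) (hcard 5) hw0 hw

lemma psiG_zdGraph_galoisField_prod :
    psiG (zdGraph (GaloisField 2 2 × GaloisField 2 2)) = 3 := by
  have := psiG_zdGraph_prod_add_one (R := GaloisField 2 2) (R' := GaloisField 2 2)
  rw [natCard_galoisField_two_two] at this
  lia

lemma natCard_ZDV_mem_Icc (hγ : gammaA (zdGraph R) = 2) (hψ : 2 ≤ psiG (zdGraph R)) :
    Nat.card (ZDV R) ∈ Set.Icc 4 6 := by
  have := nonempty_of_gammaA_ne_zero (hγ ▸ two_ne_zero)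
  obtain ⟨S, hS, hS_card⟩ := exists_ncard_eq_gammaA (zdGraph R)
  have hle := hS.card_le
  have hmul := gammaA_mul_psiG_le_card (zdGraph R)
  rw [hS_card, hγ] at hle
  rw [hγ] at hmul
  exact ⟨by lia, hle⟩

lemma natCard_maximalIdeal_eq_five [IsLocalRing R] (hγ : gammaA (zdGraph R) = 2)
    (hψ : 2 ≤ psiG (zdGraph R)) : Nat.card (maximalIdeal R) = 5 := by
  obtain ⟨hge, hle⟩ := natCard_ZDV_mem_Icc hγ hψ
  have hcard : Nat.card (ZDV R) + 1 = Nat.card (maximalIdeal R) := natCard_ZDV_add_one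
  have hne_six : Nat.card (maximalIdeal R) ≠ 6 := by
    intro h
    have hdvd : 6 ∣ Nat.card R := h ▸ (maximalIdeal R).toAddSubgroup.card_addSubgroup_dvd_card
    obtain ⟨p, -, hp⟩ :=
      isPrimePow_iff_unique_prime_dvd.mp (isPrimePow_natCard_of_isLocalRing (R := R))
    have h2 := hp 2 ⟨Nat.prime_two, dvd_trans (by norm_num) hdvd⟩
    have h3 := hp 3 ⟨Nat.prime_three, dvd_trans (by norm_num) hdvd⟩
    lia
  have hne_seven : Nat.card (maximalIdeal R) ≠ 7 := by
    intro h
    have := nonempty_of_gammaA_ne_zero (hγ ▸ two_ne_zero)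
    have htop := card_le_two_mul_gammaA_top (V := ZDV R)
    rw [← zdGraph_eq_top (h ▸ by norm_num), hγ] at htop
    lia
  lia

lemma nonempty_ringEquiv_of_isLocalRing [IsLocalRing R] (hγ : gammaA (zdGraph R) = 2)
    (hψ : 2 ≤ psiG (zdGraph R)) : Nonempty (R ≃+* ZMod 25) ∨
      Nonempty (R ≃+* (ZMod 5)[X] ⧸ Ideal.span {(X : (ZMod 5)[X]) ^ 2}) := by
  have hm := natCard_maximalIdeal_eq_five hγ hψ
  have hp : (Nat.card (maximalIdeal R)).Prime := hm ▸ Nat.prime_five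
  obtain ⟨w, hw0, hw⟩ := exists_ne_zero_mul_self_eq_zero_of_isLocalRing hp
  have hcard := natCard_eq_sq_of_natCard_maximalIdeal hp
  rw [hm] at hcard
  exact nonempty_ringEquiv_of_natCard_eq_sq Nat.prime_five hcard hw0 hw

lemma natCard_eq_two_of_maximalIdeal_ne_bot [IsLocalRing A] [IsLocalRing B]
    (hγ : gammaA (zdGraph (A × B)) = 2) (hψ : 2 ≤ psiG (zdGraph (A × B)))
    (hB : maximalIdeal B ≠ ⊥) : Nat.card A = 2 ∧ Nat.card (maximalIdeal B) = 2 := by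
  obtain ⟨-, hle⟩ := natCard_ZDV_mem_Icc hγ hψ
  have hmul := natCard_add_one_mul_natCard_maximalIdeal_le (A := A) (B := B)
  have hA_ge : 2 ≤ Nat.card A := Finite.one_lt_card
  have hm_ge : 2 ≤ Nat.card (maximalIdeal B) := by
    have := natCard_ideal_ne_one_iff.mpr hB
    have := Nat.card_pos (α := maximalIdeal B)
    lia
  constructor <;> nlinarith

lemma nonempty_ringEquiv_prod_of_maximalIdeal_ne_bot [IsLocalRing A] [IsLocalRing B]
    (hγ : gammaA (zdGraph (A × B)) = 2) (hψ : 2 ≤ psiG (zdGraph (A × B)))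
    (hB : maximalIdeal B ≠ ⊥) : Nonempty (A × B ≃+* ZMod 2 × ZMod 4) ∨
      Nonempty (A × B ≃+* ZMod 2 × ((ZMod 2)[X] ⧸ Ideal.span {(X : (ZMod 2)[X]) ^ 2})) := by
  obtain ⟨hA, hm⟩ := natCard_eq_two_of_maximalIdeal_ne_bot hγ hψ hB
  have hp : (Nat.card (maximalIdeal B)).Prime := hm ▸ Nat.prime_two
  obtain ⟨w, hw0, hw⟩ := exists_ne_zero_mul_self_eq_zero_of_isLocalRing hp
  have hcard := natCard_eq_sq_of_natCard_maximalIdeal hp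
  rw [hm] at hcard
  obtain ⟨e⟩ := nonempty_ringEquiv_zmod_of_natCard_eq Nat.prime_two hA
  exact (nonempty_ringEquiv_of_natCard_eq_sq Nat.prime_two hcard hw0 hw).imp
    (fun ⟨f⟩ ↦ ⟨e.prodCongr f⟩) (fun ⟨f⟩ ↦ ⟨e.prodCongr f⟩)

lemma nonempty_ringEquiv_prod_of_isDomain [IsDomain A] [IsDomain B]
    (hγ : gammaA (zdGraph (A × B)) = 2) (hψ : 2 ≤ psiG (zdGraph (A × B))) :
    Nonempty (A × B ≃+* ZMod 3 × ZMod 3) ∨ Nonempty (A × B ≃+* ZMod 3 × GaloisField 2 2) ∨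
      Nonempty (A × B ≃+* GaloisField 2 2 × GaloisField 2 2) := by
  obtain ⟨hA, hB⟩ := natCard_mem_Icc_of_isDomain hγ hψ
  have hA34 : Nat.card A = 3 ∨ Nat.card A = 4 := by grind
  have hB34 : Nat.card B = 3 ∨ Nat.card B = 4 := by grind
  rcases hA34 with hA | hA <;> rcases hB34 with hB | hB
  · obtain ⟨e⟩ := nonempty_ringEquiv_zmod_of_natCard_eq Nat.prime_three hA
    obtain ⟨f⟩ := nonempty_ringEquiv_zmod_of_natCard_eq Nat.prime_three hB
    exact .inl ⟨e.prodCongr f⟩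
  · obtain ⟨e⟩ := nonempty_ringEquiv_zmod_of_natCard_eq Nat.prime_three hA
    obtain ⟨f⟩ := nonempty_ringEquiv_galoisField_of_natCard_eq_four hB
    exact .inr (.inl ⟨e.prodCongr f⟩)
  · obtain ⟨e⟩ := nonempty_ringEquiv_galoisField_of_natCard_eq_four hA
    obtain ⟨f⟩ := nonempty_ringEquiv_zmod_of_natCard_eq Nat.prime_three hB
    exact .inr (.inl ⟨RingEquiv.prodComm.trans (f.prodCongr e)⟩)
  · obtain ⟨e⟩ := nonempty_ringEquiv_galoisField_of_natCard_eq_four hA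
    obtain ⟨f⟩ := nonempty_ringEquiv_galoisField_of_natCard_eq_four hB
    exact .inr (.inr ⟨e.prodCongr f⟩)

lemma isPsiGTwoRing_or_nonempty_ringEquiv_prod [IsLocalRing A] [IsLocalRing B]
    (hγ : gammaA (zdGraph (A × B)) = 2) (hψ : 2 ≤ psiG (zdGraph (A × B))) :
    IsPsiGTwoRing (A × B) ∨ Nonempty (A × B ≃+* GaloisField 2 2 × GaloisField 2 2) := by
  by_cases hB : maximalIdeal B = ⊥
  · by_cases hA : maximalIdeal A = ⊥
    · have := (isField_iff_maximalIdeal_eq.mpr hA).isDomain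
      have := (isField_iff_maximalIdeal_eq.mpr hB).isDomain
      rcases nonempty_ringEquiv_prod_of_isDomain hγ hψ with h | h | h
      exacts [.inl (.inr (.inr (.inl h))), .inl (.inr (.inr (.inr (.inl h)))), .inr h]
    · let e : A × B ≃+* B × A := RingEquiv.prodComm
      rw [gammaA_congr (zdGraphIso e)] at hγ
      rw [psiG_congr (zdGraphIso e)] at hψ
      rcases nonempty_ringEquiv_prod_of_maximalIdeal_ne_bot hγ hψ hA with ⟨⟨f⟩⟩ | ⟨⟨f⟩⟩
      exacts [.inl (.inl ⟨e.trans f⟩), .inl (.inr (.inl ⟨e.trans f⟩))]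
  · rcases nonempty_ringEquiv_prod_of_maximalIdeal_ne_bot hγ hψ hB with h | h
    exacts [.inl (.inl h), .inl (.inr (.inl h))]

lemma isPsiGTwoRing_or_nonempty_ringEquiv [Nontrivial R]
    (hγ : gammaA (zdGraph R) = 2) (hψ : 2 ≤ psiG (zdGraph R)) :
    IsPsiGTwoRing R ∨ Nonempty (R ≃+* GaloisField 2 2 × GaloisField 2 2) := by
  rcases isLocalRing_or_exists_ringEquiv_prod (natCard_maximalSpectrum_le_two hγ) with
    hlocal | ⟨I, J, ⟨e⟩⟩
  · rcases nonempty_ringEquiv_of_isLocalRing hγ hψ with h | h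
    exacts [.inl (.inr (.inr (.inr (.inr (.inl h))))), .inl (.inr (.inr (.inr (.inr (.inr h)))))]
  · have := Finite.of_equiv R e.toEquiv
    have : Finite (Localization.AtPrime I.asIdeal) :=
      Finite.prod_left (Localization.AtPrime J.asIdeal)
    have : Finite (Localization.AtPrime J.asIdeal) :=
      Finite.prod_right (Localization.AtPrime I.asIdeal)
    rw [gammaA_congr (zdGraphIso e)] at hγ
    rw [psiG_congr (zdGraphIso e)] at hψ
    exact (isPsiGTwoRing_or_nonempty_ringEquiv_prod hγ hψ).imp (.of_ringEquiv e)
      fun ⟨f⟩ ↦ ⟨e.trans f⟩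

end Classification

/-- For a finite commutative ring `R` with `γ_a(Γ(R)) = 2`:
`ψ_g(Γ(R)) = 2` iff `R` is isomorphic to one of `ℤ₂ × ℤ₄`, `ℤ₂ × ℤ₂[X]/(X²)`,
`ℤ₃ × ℤ₃`, `ℤ₃ × 𝔽₄`, `ℤ₂₅`, `ℤ₅[X]/(X²)`; and `ψ_g(Γ(R)) = 3` iff `R ≅ 𝔽₄ × 𝔽₄`. -/
theorem stmt19 (R : Type*) [CommRing R] [Finite R] [Nontrivial R]
    (h : gammaA (zdGraph R) = 2) :
    (psiG (zdGraph R) = 2 ↔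
      (Nonempty (R ≃+* (ZMod 2 × ZMod 4)) ∨
        Nonempty (R ≃+* (ZMod 2 × (Polynomial (ZMod 2) ⧸
          Ideal.span {(Polynomial.X : Polynomial (ZMod 2)) ^ 2}))) ∨
        Nonempty (R ≃+* (ZMod 3 × ZMod 3)) ∨
        Nonempty (R ≃+* (ZMod 3 × GaloisField 2 2)) ∨
        Nonempty (R ≃+* ZMod 25) ∨
        Nonempty (R ≃+* (Polynomial (ZMod 5) ⧸
          Ideal.span {(Polynomial.X : Polynomial (ZMod 5)) ^ 2})))) ∧
    (psiG (zdGraph R) = 3 ↔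
      Nonempty (R ≃+* (GaloisField 2 2 × GaloisField 2 2))) := by
  have htwo : IsPsiGTwoRing R → psiG (zdGraph R) = 2 := IsPsiGTwoRing.psiG_eq_two
  have hthree : Nonempty (R ≃+* GaloisField 2 2 × GaloisField 2 2) → psiG (zdGraph R) = 3 :=
    fun ⟨e⟩ ↦ (psiG_congr (zdGraphIso e)).trans psiG_zdGraph_galoisField_prod
  have hclass (hψ : 2 ≤ psiG (zdGraph R)) := isPsiGTwoRing_or_nonempty_ringEquiv h hψ
  refine ⟨⟨fun hψ ↦ (hclass hψ.ge).resolve_right fun hR ↦ ?_, htwo⟩,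
    ⟨fun hψ ↦ (hclass (by lia)).resolve_left fun hR ↦ ?_, hthree⟩⟩
  · have := hthree hR
    lia
  · have := htwo hR
    lia
end
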